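/- arXiv:1111.1041 — 2 statements merged into one kernel-verified Lean document; each statement's English description precedes it below -/
import Mathlib

section
/- Let r(N) = E ‖η^mono(Z)‖₂², where η^mono is the Euclidean projection of ℝ^N onto the monotone cone M_N = {x ∈ ℝ^N : x_t ≤ x_{t+1} for all 1 ≤ t ≤ N−1} and Z ∼ N(0, I_N). Then r(1) = 1; for every N ≥ 10, r(N) ≤ 20 (log N)²; and for every N ≥ 1, r(N) < 2N(log N + 1). Here log denotes the natural logarithm. -/
open MeasureTheory ProbabilityTheory ENNReal

noncomputable section

/-- The standard Gaussian measure `N(0, I_N)` on `ℝ^N`. -/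
def stdGaussian (N : ℕ) : Measure (Fin N → ℝ) :=
  Measure.pi fun _ => gaussianReal 0 1

/-- The cone `M_N` of nondecreasing sequences in `ℝ^N`. -/
def monoCone (N : ℕ) : Set (Fin N → ℝ) := {x | Monotone x}

section
variable (η : ∀ ℓ : ℕ, (Fin ℓ → ℝ) → (Fin ℓ → ℝ))

/-- The risk at zero of monotone regression in dimension `N`,
`r(N) = E ‖η^mono(Z)‖₂²`, `Z ∼ N(0, I_N)`. -/
def riskAtZero (N : ℕ) : ℝ≥0∞ :=
  ∫⁻ z, ENNReal.ofReal (∑ i, (η N z i) ^ 2) ∂(stdGaussian N)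

end

/-!
Moving the values of the projection `p` of `y` on a level set `{i | r ≤ p i}` slightly down keeps
them monotone, so the variational inequality shows that `y` averages at least `r` over this level
set, which is a final block of indices. For `r = p t ≥ 0` the block contains `{t, …, N}`, so
`(p t) ^ 2` is at most `(N - t + 1)⁻¹` times the largest squared normalised sum of `y` over a final
block. Negative values are handled by initial blocks, and summing over `t` costs a harmonic factor
`1 + log N`. When `y` is Gaussian each normalised block sum is standard Gaussian, and the
expected maximum of `N` squares of standard Gaussians is at most `4 (log N + 1)`, with no
independence needed. Altogether `r(N) ≤ 8 (1 + log N) ^ 2`, while `r(N) ≤ N` because projecting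
onto a convex set containing `0` does not increase the norm.
-/

section NearestPoint

variable {ι : Type*} [Fintype ι] {K : Set (ι → ℝ)} {y p : ι → ℝ}

/-- `p` is a Euclidean projection of `y` onto `K`: a point of `K` at least squared distance
from `y`. The squared distance is spelled out because `ι → ℝ` carries the sup norm. -/
def IsNearestPoint (K : Set (ι → ℝ)) (y p : ι → ℝ) : Prop :=
  p ∈ K ∧ ∀ x ∈ K, ∑ i, (y i - p i) ^ 2 ≤ ∑ i, (y i - x i) ^ 2

namespace IsNearestPoint

lemma eq_self (h : IsNearestPoint K y p) (hy : y ∈ K) : p = y := by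
  have hsum : ∑ i, (y i - p i) ^ 2 = 0 :=
    le_antisymm (by simpa using h.2 y hy) (by positivity)
  rw [Finset.sum_eq_zero_iff_of_nonneg fun i _ => sq_nonneg _] at hsum
  ext i
  exact (sub_eq_zero.1 (pow_eq_zero_iff two_ne_zero |>.1 (hsum i (Finset.mem_univ i)))).symm

lemma sum_mul_sub_nonpos (h : IsNearestPoint K y p) (hK : Convex ℝ K) {x : ι → ℝ} (hx : x ∈ K) :
    ∑ i, (y i - p i) * (x i - p i) ≤ 0 := by
  let K' : Set (EuclideanSpace ℝ ι) := (WithLp.linearEquiv 2 ℝ (ι → ℝ)) ⁻¹' K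
  have hK' : Convex ℝ K' := hK.linear_preimage (WithLp.linearEquiv 2 ℝ (ι → ℝ)).toLinearMap
  have hp : WithLp.toLp 2 p ∈ K' := h.1
  have : Nonempty K' := ⟨⟨_, hp⟩⟩
  have hdist : ‖WithLp.toLp 2 y - WithLp.toLp 2 p‖ = ⨅ w : K', ‖WithLp.toLp 2 y - w‖ := by
    refine le_antisymm (le_ciInf fun w => ?_)
      (ciInf_le ⟨0, Set.forall_mem_range.2 fun _ => norm_nonneg _⟩ (⟨_, hp⟩ : K'))
    simpa [EuclideanSpace.norm_eq] using Real.sqrt_le_sqrt (h.2 _ w.2)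
  simpa [PiLp.inner_apply, mul_comm] using
    (norm_eq_iInf_iff_real_inner_le_zero hK' hp).1 hdist (WithLp.toLp 2 x) hx

lemma sum_sq_le (h : IsNearestPoint K y p) (hK : Convex ℝ K) (h0 : 0 ∈ K) :
    ∑ i, p i ^ 2 ≤ ∑ i, y i ^ 2 := by
  have hvar := h.sum_mul_sub_nonpos hK h0
  have hexp : ∑ i, p i ^ 2 ≤ ∑ i, (y i ^ 2 + 2 * ((y i - p i) * (0 - p i))) :=
    Finset.sum_le_sum fun i _ => by linarith [sq_nonneg (y i - p i)]
  rw [Finset.sum_add_distrib, ← Finset.mul_sum] at hexp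
  simp only [Pi.zero_apply] at hvar
  linarith

end IsNearestPoint

end NearestPoint

section Isotonic

variable {ι : Type*} [Preorder ι]

lemma convex_setOf_monotone : Convex ℝ {x : ι → ℝ | Monotone x} :=
  fun _ hx _ hy _ _ ha hb _ => (hx.const_mul ha).add (hy.const_mul hb)

variable [Fintype ι] {y p : ι → ℝ}

namespace IsNearestPoint

lemma monotone (h : IsNearestPoint {x | Monotone x} y p) : Monotone p := h.1

lemma orderDual_neg (h : IsNearestPoint {x | Monotone x} y p) :
    IsNearestPoint {x | Monotone x} (fun i : ιᵒᵈ => -y (OrderDual.ofDual i))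
      (fun i => -p (OrderDual.ofDual i)) := by
  refine ⟨fun _ _ hij => neg_le_neg (h.monotone hij), fun x hx => ?_⟩
  have hle := h.2 (fun i => -x (OrderDual.toDual i)) fun _ _ hij => neg_le_neg (hx hij)
  have hsq (a b : ℝ) : (-a - b) ^ 2 = (a - -b) ^ 2 := by ring
  simp only [hsq, neg_neg]
  exact hle

lemma card_mul_le_sum (h : IsNearestPoint {x | Monotone x} y p) (r : ℝ) :
    (Finset.card {i | r ≤ p i} : ℝ) * r ≤ ∑ i with r ≤ p i, y i := by
  have hgap : ∀ᶠ c in nhdsWithin r (Set.Iio r), (∀ i, p i < r → p i ≤ c) ∧ c < r :=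
    (Filter.eventually_all.2 fun i => Filter.eventually_imp_distrib_left.2 fun hi =>
      (nhdsWithin_le_nhds (eventually_ge_nhds hi))).and self_mem_nhdsWithin
  obtain ⟨c, hc, hcr⟩ := hgap.exists
  -- Lowering the level set `{r ≤ p}` down to the gap below it keeps `p` monotone.
  have hmono : Monotone fun i => if r ≤ p i then p i - (r - c) else p i := fun i j hij => by
    have := h.monotone hij
    have := hc i
    dsimp only
    split_ifs <;> grind
  have hvar := h.sum_mul_sub_nonpos convex_setOf_monotone hmono
  have hsum : ∑ i, (y i - p i) * ((if r ≤ p i then p i - (r - c) else p i) - p i)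
      = (r - c) * ∑ i with r ≤ p i, (p i - y i) := by
    rw [Finset.mul_sum, Finset.sum_filter]
    exact Finset.sum_congr rfl fun i _ => by split_ifs <;> ring
  have hpy : ∑ i with r ≤ p i, (p i - y i) ≤ 0 :=
    nonpos_of_mul_nonpos_right (hsum ▸ hvar) (sub_pos.2 hcr)
  have hr : Finset.card {i | r ≤ p i} • r ≤ ∑ i with r ≤ p i, p i :=
    Finset.card_nsmul_le_sum _ _ _ fun i hi => (Finset.mem_filter.1 hi).2
  rw [Finset.sum_sub_distrib] at hpy
  rw [nsmul_eq_mul] at hr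
  linarith

lemma sum_le_card_mul (h : IsNearestPoint {x | Monotone x} y p) (r : ℝ) :
    ∑ i with p i ≤ r, y i ≤ (Finset.card {i | p i ≤ r} : ℝ) * r := by
  have hdual := h.orderDual_neg.card_mul_le_sum (-r)
  simp only [neg_le_neg_iff, Finset.sum_neg_distrib, mul_neg] at hdual
  exact hdual

end IsNearestPoint

end Isotonic

section Maximal

lemma le_add_mul_exp_div {a : ℝ} (ha : 0 < a) (u x : ℝ) :
    x ≤ a * (u - 1) + a * Real.exp (-u) * Real.exp (x / a) := by
  have htangent := Real.add_one_le_exp (-u + x / a)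
  rw [Real.exp_add] at htangent
  calc x = a * (x / a) := by field_simp
    _ ≤ a * (u - 1 + Real.exp (-u) * Real.exp (x / a)) := by gcongr; linarith
    _ = a * (u - 1) + a * Real.exp (-u) * Real.exp (x / a) := by ring

lemma ciSup_le_add_mul_sum_exp_div {κ : Type*} [Fintype κ] [Nonempty κ] {a : ℝ} (ha : 0 < a)
    (u : ℝ) (x : κ → ℝ) :
    ⨆ c, x c ≤ a * (u - 1) + a * Real.exp (-u) * ∑ c, Real.exp (x c / a) := by
  refine ciSup_le fun c => (le_add_mul_exp_div ha u (x c)).trans ?_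
  gcongr
  exact Finset.single_le_sum (f := fun c => Real.exp (x c / a))
    (fun c _ => (Real.exp_pos _).le) (Finset.mem_univ c)

lemma lintegral_ofReal_iSup_le {Ω κ : Type*} [MeasurableSpace Ω] {μ : Measure Ω}
    [IsProbabilityMeasure μ] [Fintype κ] [Nonempty κ] {X : κ → Ω → ℝ}
    (hX : ∀ c, Measurable (X c)) {a s : ℝ} (ha : 0 < a) (hs : 1 ≤ s)
    (hexp : ∀ c, ∫⁻ ω, ENNReal.ofReal (Real.exp (X c ω / a)) ∂μ ≤ ENNReal.ofReal (Real.exp s)) :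
    ∫⁻ ω, ENNReal.ofReal (⨆ c, X c ω) ∂μ
      ≤ ENNReal.ofReal (a * (Real.log (Fintype.card κ) + s)) := by
  -- At `u = log |κ| + s` the tangent line of `exp` exactly balances the union bound.
  set u := Real.log (Fintype.card κ) + s with hu
  have hcard : (0 : ℝ) < Fintype.card κ := by exact_mod_cast Fintype.card_pos
  have hconst : 0 ≤ a * (u - 1) :=
    mul_nonneg ha.le (by linarith [Real.log_natCast_nonneg (Fintype.card κ)])
  have hbalance : Real.exp (-u) * (Fintype.card κ * Real.exp s) = 1 := by
    rw [← Real.exp_log hcard, ← Real.exp_add, ← Real.exp_add, neg_add_cancel, Real.exp_zero]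
  have hpointwise (ω : Ω) : ENNReal.ofReal (⨆ c, X c ω) ≤ ENNReal.ofReal (a * (u - 1)) +
      ENNReal.ofReal (a * Real.exp (-u)) * ∑ c, ENNReal.ofReal (Real.exp (X c ω / a)) := by
    rw [← ENNReal.ofReal_sum_of_nonneg fun c _ => (Real.exp_pos _).le,
      ← ENNReal.ofReal_mul (by positivity), ← ENNReal.ofReal_add hconst (by positivity)]
    exact ENNReal.ofReal_le_ofReal (ciSup_le_add_mul_sum_exp_div ha u fun c => X c ω)
  calc ∫⁻ ω, ENNReal.ofReal (⨆ c, X c ω) ∂μ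
      ≤ ENNReal.ofReal (a * (u - 1)) + ENNReal.ofReal (a * Real.exp (-u)) *
          ∑ c, ∫⁻ ω, ENNReal.ofReal (Real.exp (X c ω / a)) ∂μ := by
        refine (lintegral_mono hpointwise).trans_eq ?_
        rw [lintegral_add_left measurable_const, lintegral_const, measure_univ, mul_one,
          lintegral_const_mul' _ _ ENNReal.ofReal_ne_top,
          lintegral_finsetSum _ fun c _ => ((hX c).div_const a).exp.ennreal_ofReal]
    _ ≤ ENNReal.ofReal (a * (u - 1)) + ENNReal.ofReal (a * Real.exp (-u)) *
          ∑ _c : κ, ENNReal.ofReal (Real.exp s) := by gcongr with c; exact hexp c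
    _ = ENNReal.ofReal (a * u) := by
        rw [← ENNReal.ofReal_sum_of_nonneg fun _ _ => (Real.exp_pos s).le,
          ← ENNReal.ofReal_mul (by positivity), ← ENNReal.ofReal_add hconst (by positivity),
          Finset.sum_const, Finset.card_univ, nsmul_eq_mul, mul_assoc, hbalance]
        ring_nf

end Maximal

section Gaussian

lemma lintegral_exp_mul_sq_gaussianReal {b : ℝ} (hb : b < 1 / 2) :
    ∫⁻ x, ENNReal.ofReal (Real.exp (b * x ^ 2)) ∂(gaussianReal 0 1)
      = ENNReal.ofReal (√(1 - 2 * b))⁻¹ := by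
  have hpos : 0 < 1 / 2 - b := sub_pos.2 hb
  have hprod (x : ℝ) : gaussianPDFReal 0 1 x * Real.exp (b * x ^ 2)
      = (√(2 * Real.pi))⁻¹ * Real.exp (-(1 / 2 - b) * x ^ 2) := by
    rw [gaussianPDFReal, mul_assoc, ← Real.exp_add]
    simp only [NNReal.coe_one, sub_zero, mul_one]
    ring_nf
  have hvalue : (√(2 * Real.pi))⁻¹ * √(Real.pi / (1 / 2 - b)) = (√(1 - 2 * b))⁻¹ := by
    rw [← Real.sqrt_inv, ← Real.sqrt_inv, ← Real.sqrt_mul (by positivity)]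
    congr 1
    have : 1 - 2 * b ≠ 0 := by linarith
    field_simp
  rw [gaussianReal_of_var_ne_zero _ one_ne_zero,
    lintegral_withDensity_eq_lintegral_mul _ (measurable_gaussianPDF _ _) (by fun_prop)]
  simp only [Pi.mul_apply, gaussianPDF, ← ENNReal.ofReal_mul (gaussianPDFReal_nonneg _ _ _), hprod]
  rw [← ofReal_integral_eq_lintegral_ofReal ((integrable_exp_neg_mul_sq hpos).const_mul _)
    (ae_of_all _ fun x => by positivity), integral_const_mul, integral_gaussian, hvalue]

lemma lintegral_sq_gaussianReal (v : NNReal) :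
    ∫⁻ x, ENNReal.ofReal (x ^ 2) ∂(gaussianReal 0 v) = v := by
  have hvar := variance_fun_id_gaussianReal (μ := 0) (v := v)
  rw [variance_of_integral_eq_zero (by fun_prop) (by simp)] at hvar
  have hint : Integrable (fun x : ℝ => x ^ 2) (gaussianReal 0 v) :=
    (memLp_id_gaussianReal 2).integrable_sq
  rw [← ofReal_integral_eq_lintegral_ofReal hint (ae_of_all _ fun x => sq_nonneg x), hvar,
    ENNReal.ofReal_coe_nnreal]

variable {N : ℕ}

instance isProbabilityMeasure_stdGaussian : IsProbabilityMeasure (stdGaussian N) :=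
  inferInstanceAs (IsProbabilityMeasure (Measure.pi _))

lemma hasLaw_eval_stdGaussian (i : Fin N) :
    HasLaw (fun z => z i) (gaussianReal 0 1) (stdGaussian N) :=
  (measurePreserving_eval (fun _ : Fin N => gaussianReal 0 1) i).hasLaw

lemma hasLaw_sum_mul_stdGaussian {a : Fin N → ℝ} (ha : ∑ i, a i ^ 2 = 1) :
    HasLaw (fun z => ∑ i, a i * z i) (gaussianReal 0 1) (stdGaussian N) := by
  let E := EuclideanSpace ℝ (Fin N)
  have htoLp : HasLaw (WithLp.toLp 2) (ProbabilityTheory.stdGaussian E) (stdGaussian N) :=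
    ⟨by fun_prop, map_pi_eq_stdGaussian⟩
  have hnorm : ‖(WithLp.toLp 2 a : E)‖ ^ 2 = 1 := by rw [EuclideanSpace.real_norm_sq_eq]; exact ha
  have hinner : HasLaw (innerSL ℝ (WithLp.toLp 2 a : E)) (gaussianReal 0 1)
      (ProbabilityTheory.stdGaussian E) :=
    ⟨by fun_prop, by
      rw [IsGaussian.map_eq_gaussianReal, integral_strongDual_stdGaussian,
        variance_dual_stdGaussian, innerSL_apply_norm, hnorm, Real.toNNReal_one]⟩
  simpa [PiLp.inner_apply, mul_comm] using hinner.fun_comp htoLp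

lemma lintegral_sum_sq_stdGaussian :
    ∫⁻ z, ENNReal.ofReal (∑ i, z i ^ 2) ∂(stdGaussian N) = N := by
  simp_rw [ENNReal.ofReal_sum_of_nonneg fun _ _ => sq_nonneg _]
  rw [lintegral_finsetSum _ fun i _ => by fun_prop]
  simp_rw [fun i : Fin N => (hasLaw_eval_stdGaussian i).lintegral_comp
    (f := fun x => ENNReal.ofReal (x ^ 2)) (by fun_prop), lintegral_sq_gaussianReal]
  simp

end Gaussian

section BlockScore

/-- The sum of `z` over the block `A`, normalised so that it is standard Gaussian when `z` is and
`A` is nonempty; it is `0` for empty `A`. -/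
def blockScore {ι : Type*} (A : Finset ι) (z : ι → ℝ) : ℝ := (∑ i ∈ A, z i) / √(A.card)

/-- The largest squared block score of `z` over the blocks of the family `F`. -/
def maxSqScore {ι κ : Type*} (F : κ → Finset ι) (z : ι → ℝ) : ℝ := ⨆ c, blockScore (F c) z ^ 2

variable {ι κ : Type*} {F : κ → Finset ι} {z : ι → ℝ}

lemma maxSqScore_nonneg : 0 ≤ maxSqScore F z := Real.iSup_nonneg fun _ => sq_nonneg _

lemma blockScore_sq_le_maxSqScore [Finite κ] (c : κ) :
    blockScore (F c) z ^ 2 ≤ maxSqScore F z :=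
  le_ciSup (f := fun c => blockScore (F c) z ^ 2) (Set.finite_range _).bddAbove c

lemma measurable_blockScore (A : Finset ι) : Measurable (blockScore A) := by
  unfold blockScore
  fun_prop

lemma measurable_maxSqScore [Finite κ] : Measurable (maxSqScore F) :=
  Measurable.iSup fun c => (measurable_blockScore (F c)).pow_const 2

lemma sq_le_blockScore_sq_div {A : Finset ι} {k : ℕ} (hk : 0 < k) (hkA : k ≤ A.card) {r : ℝ}
    (h : A.card * |r| ≤ |∑ i ∈ A, z i|) : r ^ 2 ≤ blockScore A z ^ 2 / k := by
  have hkA' : (k : ℝ) ≤ A.card := by exact_mod_cast hkA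
  have hk' : (0 : ℝ) < k := by exact_mod_cast hk
  have hA : (0 : ℝ) < A.card := hk'.trans_le hkA'
  rw [le_div_iff₀ hk', blockScore, div_pow, Real.sq_sqrt hA.le, le_div_iff₀ hA]
  calc r ^ 2 * k * A.card ≤ r ^ 2 * A.card * A.card := by gcongr
    _ = (A.card * |r|) ^ 2 := by rw [mul_pow, sq_abs]; ring
    _ ≤ |∑ i ∈ A, z i| ^ 2 := by gcongr
    _ = (∑ i ∈ A, z i) ^ 2 := sq_abs _

variable {N : ℕ}

lemma hasLaw_blockScore {A : Finset (Fin N)} (hA : A.Nonempty) :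
    HasLaw (blockScore A) (gaussianReal 0 1) (stdGaussian N) := by
  have hcard : (0 : ℝ) < A.card := by exact_mod_cast hA.card_pos
  have hunit : ∑ i, (if i ∈ A then (√(A.card : ℝ))⁻¹ else 0) ^ 2 = 1 := by
    simp [ite_pow, Finset.sum_ite_mem, hcard.ne']
  convert hasLaw_sum_mul_stdGaussian hunit using 2 with z
  simp [blockScore, ite_mul, Finset.sum_ite_mem, Finset.mul_sum, div_eq_inv_mul]

lemma lintegral_maxSqScore_le [Fintype κ] [Nonempty κ] {F : κ → Finset (Fin N)}
    (hF : ∀ c, (F c).Nonempty) :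
    ∫⁻ z, ENNReal.ofReal (maxSqScore F z) ∂(stdGaussian N)
      ≤ ENNReal.ofReal (4 * (Real.log (Fintype.card κ) + 1)) := by
  refine lintegral_ofReal_iSup_le (fun c => (measurable_blockScore (F c)).pow_const 2)
    four_pos le_rfl fun c => ?_
  have hlaw := (hasLaw_blockScore (hF c)).lintegral_comp
    (f := fun x => ENNReal.ofReal (Real.exp (1 / 4 * x ^ 2))) (by fun_prop)
  rw [lintegral_exp_mul_sq_gaussianReal (by norm_num)] at hlaw
  simp only [one_div_mul_eq_div] at hlaw
  rw [hlaw]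
  refine ENNReal.ofReal_le_ofReal ?_
  calc (√(1 - 2 * (1 / 4) : ℝ))⁻¹ = √2 := by rw [← Real.sqrt_inv]; norm_num
    _ ≤ 2 := Real.sqrt_le_iff.2 (by norm_num)
    _ ≤ Real.exp 1 := by linarith [Real.add_one_le_exp (1 : ℝ)]

end BlockScore

section LevelSets

variable {ι : Type*} [LinearOrder ι] [Fintype ι] {p : ι → ℝ}

lemma exists_filter_le_eq_Ici [LocallyFiniteOrderTop ι] (hp : Monotone p) (t : ι) :
    ∃ a ≤ t, ({i | p t ≤ p i} : Finset ι) = Finset.Ici a := by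
  obtain ⟨a, ha, hmin⟩ := Finset.exists_min_image {i | p t ≤ p i} id ⟨t, by simp⟩
  simp only [Finset.mem_filter_univ] at ha hmin
  exact ⟨a, hmin t le_rfl, by ext i; simpa using ⟨hmin i, fun hai => ha.trans (hp hai)⟩⟩

lemma exists_filter_ge_eq_Iic [LocallyFiniteOrderBot ι] (hp : Monotone p) (t : ι) :
    ∃ b ≥ t, ({i | p i ≤ p t} : Finset ι) = Finset.Iic b := by
  obtain ⟨b, hb, hmax⟩ := Finset.exists_max_image {i | p i ≤ p t} id ⟨t, by simp⟩
  simp only [Finset.mem_filter_univ] at hb hmax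
  exact ⟨b, hmax t le_rfl, by ext i; simpa using ⟨hmax i, fun hib => (hp hib).trans hb⟩⟩

end LevelSets

section Harmonic

lemma sum_one_div_succ_le (N : ℕ) :
    ∑ t : Fin N, 1 / ((t + 1 : ℕ) : ℝ) ≤ 1 + Real.log N := by
  rw [Fin.sum_univ_eq_sum_range fun t => 1 / ((t + 1 : ℕ) : ℝ)]
  simpa [harmonic] using harmonic_le_one_add_log N

lemma sum_one_div_sub_le (N : ℕ) :
    ∑ t : Fin N, 1 / ((N - t : ℕ) : ℝ) ≤ 1 + Real.log N := by
  refine le_of_eq_of_le (Fintype.sum_equiv Fin.revPerm _ _ fun t => ?_) (sum_one_div_succ_le N)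
  rw [Fin.revPerm_apply, Fin.val_rev, ← Nat.sub_sub, Nat.sub_add_cancel (by omega)]

end Harmonic

section MonotoneRegression

variable {N : ℕ}

namespace IsNearestPoint

variable {y p : Fin N → ℝ}

lemma sq_le_maxSqScore_Ici (h : IsNearestPoint (monoCone N) y p) {t : Fin N} (ht : 0 ≤ p t) :
    p t ^ 2 ≤ maxSqScore Finset.Ici y / (N - t : ℕ) := by
  obtain ⟨a, hat, ha⟩ := exists_filter_le_eq_Ici h.monotone t
  have hblock := h.card_mul_le_sum (p t)
  rw [ha] at hblock
  calc p t ^ 2 ≤ blockScore (Finset.Ici a) y ^ 2 / (N - t : ℕ) :=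
        sq_le_blockScore_sq_div (by omega) (by rw [Fin.card_Ici]; omega)
          (by rw [abs_of_nonneg ht]; exact hblock.trans (le_abs_self _))
    _ ≤ maxSqScore Finset.Ici y / (N - t : ℕ) := by
        gcongr
        exact blockScore_sq_le_maxSqScore a

lemma sq_le_maxSqScore_Iic (h : IsNearestPoint (monoCone N) y p) {t : Fin N} (ht : p t ≤ 0) :
    p t ^ 2 ≤ maxSqScore Finset.Iic y / (t + 1 : ℕ) := by
  obtain ⟨b, htb, hb⟩ := exists_filter_ge_eq_Iic h.monotone t
  have hblock := h.sum_le_card_mul (p t)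
  rw [hb] at hblock
  calc p t ^ 2 ≤ blockScore (Finset.Iic b) y ^ 2 / (t + 1 : ℕ) :=
        sq_le_blockScore_sq_div (by omega) (by rw [Fin.card_Iic]; omega)
          (by rw [abs_of_nonpos ht, mul_neg]; exact (neg_le_neg hblock).trans (neg_le_abs _))
    _ ≤ maxSqScore Finset.Iic y / (t + 1 : ℕ) := by
        gcongr
        exact blockScore_sq_le_maxSqScore b

lemma sum_sq_le_maxSqScore (h : IsNearestPoint (monoCone N) y p) :
    ∑ t, p t ^ 2
      ≤ (1 + Real.log N) * (maxSqScore Finset.Ici y + maxSqScore Finset.Iic y) := by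
  set M := maxSqScore Finset.Ici y
  set m := maxSqScore Finset.Iic y
  have hM : 0 ≤ M := maxSqScore_nonneg
  have hm : 0 ≤ m := maxSqScore_nonneg
  have hterm (t : Fin N) :
      p t ^ 2 ≤ M * (1 / ((N - t : ℕ) : ℝ)) + m * (1 / ((t + 1 : ℕ) : ℝ)) := by
    rw [mul_one_div, mul_one_div]
    rcases le_total 0 (p t) with ht | ht
    · exact le_add_of_le_of_nonneg (h.sq_le_maxSqScore_Ici ht) (by positivity)
    · exact le_add_of_nonneg_of_le (by positivity) (h.sq_le_maxSqScore_Iic ht)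
  calc ∑ t, p t ^ 2
      ≤ M * ∑ t : Fin N, 1 / ((N - t : ℕ) : ℝ) + m * ∑ t : Fin N, 1 / ((t + 1 : ℕ) : ℝ) := by
        rw [Finset.mul_sum, Finset.mul_sum, ← Finset.sum_add_distrib]
        exact Finset.sum_le_sum fun t _ => hterm t
    _ ≤ M * (1 + Real.log N) + m * (1 + Real.log N) := by
        gcongr
        · exact sum_one_div_sub_le N
        · exact sum_one_div_succ_le N
    _ = (1 + Real.log N) * (M + m) := by ring

end IsNearestPoint

section Risk

variable {η : ∀ ℓ : ℕ, (Fin ℓ → ℝ) → (Fin ℓ → ℝ)}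

lemma riskAtZero_one (hη : ∀ y, IsNearestPoint (monoCone 1) y (η 1 y)) : riskAtZero η 1 = 1 := by
  have hid (y : Fin 1 → ℝ) : η 1 y = y := (hη y).eq_self (Subsingleton.monotone y)
  simpa only [riskAtZero, hid, Nat.cast_one] using lintegral_sum_sq_stdGaussian (N := 1)

lemma riskAtZero_le_natCast (hη : ∀ y, IsNearestPoint (monoCone N) y (η N y)) :
    riskAtZero η N ≤ N := by
  refine (lintegral_mono fun y => ENNReal.ofReal_le_ofReal ?_).trans_eq lintegral_sum_sq_stdGaussian
  exact (hη y).sum_sq_le convex_setOf_monotone monotone_const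

lemma riskAtZero_le_log_sq (hN : 0 < N) (hη : ∀ y, IsNearestPoint (monoCone N) y (η N y)) :
    riskAtZero η N ≤ ENNReal.ofReal (8 * (1 + Real.log N) ^ 2) := by
  have : Nonempty (Fin N) := ⟨⟨0, hN⟩⟩
  set L := Real.log N
  have hscore {F : Fin N → Finset (Fin N)} (hF : ∀ c, (F c).Nonempty) :
      ∫⁻ z, ENNReal.ofReal (maxSqScore F z) ∂(stdGaussian N) ≤ ENNReal.ofReal (4 * (L + 1)) := by
    simpa only [Fintype.card_fin] using lintegral_maxSqScore_le hF
  calc riskAtZero η N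
      ≤ ∫⁻ z, ENNReal.ofReal (1 + L) * (ENNReal.ofReal (maxSqScore Finset.Ici z)
          + ENNReal.ofReal (maxSqScore Finset.Iic z)) ∂(stdGaussian N) := by
        refine lintegral_mono fun z => ?_
        rw [← ENNReal.ofReal_add maxSqScore_nonneg maxSqScore_nonneg,
          ← ENNReal.ofReal_mul (by positivity)]
        exact ENNReal.ofReal_le_ofReal (hη z).sum_sq_le_maxSqScore
    _ ≤ ENNReal.ofReal (1 + L)
          * (ENNReal.ofReal (4 * (L + 1)) + ENNReal.ofReal (4 * (L + 1))) := by
        rw [lintegral_const_mul' _ _ ENNReal.ofReal_ne_top,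
          lintegral_add_left measurable_maxSqScore.ennreal_ofReal]
        gcongr
        · exact hscore fun _ => Finset.nonempty_Ici
        · exact hscore fun _ => Finset.nonempty_Iic
    _ = ENNReal.ofReal (8 * (1 + L) ^ 2) := by
        rw [← ENNReal.ofReal_add (by positivity) (by positivity),
          ← ENNReal.ofReal_mul (by positivity)]
        ring_nf

end Risk

end MonotoneRegression

lemma two_le_log_of_ten_le {x : ℝ} (hx : 10 ≤ x) : 2 ≤ Real.log x := by
  rw [Real.le_log_iff_exp_le (by linarith), ← one_add_one_eq_two, Real.exp_add]
  nlinarith [Real.exp_one_lt_three, Real.exp_pos 1]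

/-- **Bounds for the risk at zero of monotone regression.**
Let `η N` be, in each dimension `N`, the Euclidean projection onto the
monotone cone `M_N` and `r(N) = E ‖η^mono(Z)‖₂²`.  Then `r(1) = 1`; for
`N ≥ 10`, `r(N) ≤ 20 (log N)²`; and for every `N ≥ 1`,
`r(N) < 2N(log N + 1)` (natural logarithm). -/
theorem monoReg_risk_at_zero_bounds
    (η : ∀ ℓ : ℕ, (Fin ℓ → ℝ) → (Fin ℓ → ℝ))
    (hmeas : ∀ ℓ, Measurable (η ℓ))
    (hproj : ∀ (ℓ : ℕ) (y : Fin ℓ → ℝ), η ℓ y ∈ monoCone ℓ ∧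
      ∀ x ∈ monoCone ℓ, (∑ i, (y i - η ℓ y i) ^ 2) ≤ ∑ i, (y i - x i) ^ 2) :
    riskAtZero η 1 = 1 ∧
    (∀ N : ℕ, 10 ≤ N →
      riskAtZero η N ≤ ENNReal.ofReal (20 * Real.log N ^ 2)) ∧
    (∀ N : ℕ, 1 ≤ N →
      riskAtZero η N < ENNReal.ofReal (2 * N * (Real.log N + 1))) := by
  refine ⟨riskAtZero_one (hproj 1), fun N hN => ?_, fun N hN => ?_⟩
  · refine (riskAtZero_le_log_sq (by omega) (hproj N)).trans (ENNReal.ofReal_le_ofReal ?_)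
    have hlog : 2 ≤ Real.log N := two_le_log_of_ten_le (by exact_mod_cast hN)
    nlinarith
  · have hN' : (0 : ℝ) < N := by exact_mod_cast hN
    have hlog : 0 ≤ Real.log N := Real.log_natCast_nonneg N
    calc riskAtZero η N ≤ N := riskAtZero_le_natCast (hproj N)
      _ = ENNReal.ofReal N := (ENNReal.ofReal_natCast N).symm
      _ < ENNReal.ofReal (2 * N * (Real.log N + 1)) :=
        (ENNReal.ofReal_lt_ofReal_iff (by positivity)).2 (by nlinarith)
end
end

section
/- For N ≥ 1, τ ≥ 0 and s = (s₁,s₂) ∈ {(+1,+1),(+1,−1)} (written ++ and +−), let η^tv_s(y;τ) = argmin_{x∈ℝ^N} { ½‖y − x‖₂² + τ‖x‖_TV + τ(s₁x₁ + s₂x_N) } and let r_s(N;τ) = E ‖η^tv_s(Z;τ)‖₂² with Z ∼ N(0, I_N). For L ∈ ℕ let F_{N,ε,TV}(L) be the set of Borel probability measures ν on ℝ^N supported on vectors x whose maximal constant segments all have length at most L and with E_ν[#{t ∈ {1,…,N−1} : X_t ≠ X_{t+1}}] ≤ Nε, and set M(F_{N,ε,TV}(L)|TV) = (1/N) inf_{τ≥0}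 sup_{ν∈F_{N,ε,TV}(L)} E_ν ‖X − η^tv(X+Z;τ)‖₂² (X ∼ ν, Z ∼ N(0,I_N) independent). Then the limit M_L(ε|TV) = lim_{N→∞} M(F_{N,ε,TV}(L)|TV) exists and equals inf_{τ≥0} max_π { ε Σ_{1≤ℓ≤L, s∈{++,+−}} π_{ℓ,s} r_s(ℓ;τ) : π a probability distribution on {1,…,L}×{++,+−} with Σ_{ℓ,s} ℓ π_{ℓ,s} = 1/ε }. -/
open MeasureTheory ProbabilityTheory ENNReal Filter

noncomputable section

/-- Extension of `x : ℝ^N` to `ℕ` by zero. -/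
def extz (N : ℕ) (x : Fin N → ℝ) : ℕ → ℝ := fun i => if h : i < N then x ⟨i, h⟩ else 0

/-- The discrete total variation `‖x‖_TV = Σ_{i=1}^{N−1} |x_{i+1} − x_i|`. -/
def tvNorm (N : ℕ) (x : Fin N → ℝ) : ℝ :=
  ∑ i ∈ Finset.range (N - 1), |extz N x (i + 1) - extz N x i|

/-- The objective of the boundary-signed TV denoiser:
`½‖y − x‖₂² + τ‖x‖_TV + τ(s₁x₁ + s₂x_N)`. -/
def tvObj (s : ℝ × ℝ) (N : ℕ) (τ : ℝ) (y x : Fin N → ℝ) : ℝ :=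
  (1 / 2) * (∑ i, (y i - x i) ^ 2) + τ * tvNorm N x +
    τ * (s.1 * extz N x 0 + s.2 * extz N x (N - 1))

/-- The number of change points of `x : ℝ^N`, i.e. of adjacent pairs
`(i, i+1)` with `x i ≠ x (i+1)`. -/
def changeCount (N : ℕ) (x : Fin N → ℝ) : ℕ :=
  Nat.card {p : Fin N × Fin N // (p.1 : ℕ) + 1 = (p.2 : ℕ) ∧ x p.1 ≠ x p.2}

/-- `x : ℝ^N` has all its maximal constant segments of length at most `L`,
i.e. there are no `L+1` consecutive equal entries. -/
def segOK (L N : ℕ) (x : Fin N → ℝ) : Prop :=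
  ∀ i : ℕ, i + L < N → ∃ j : ℕ, i ≤ j ∧ j < i + L ∧ extz N x j ≠ extz N x (j + 1)

/-- The class `F_{N,ε,TV}(L)`: probability measures supported on vectors whose
maximal constant segments have length at most `L`, with expected number of
change points at most `Nε`. -/
def tvClass (N : ℕ) (ε : ℝ) (L : ℕ) : Set (Measure (Fin N → ℝ)) :=
  {ν | IsProbabilityMeasure ν ∧ ν {x | ¬ segOK L N x} = 0 ∧
    (∫⁻ x, (changeCount N x : ℝ≥0∞) ∂ν) ≤ (N : ℝ≥0∞) * ENNReal.ofReal ε}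

section
variable (η : (ℝ × ℝ) → ∀ N : ℕ, ℝ → (Fin N → ℝ) → (Fin N → ℝ))

/-- The risk at zero `r_s(ℓ;τ) = E ‖η^tv_s(Z;τ)‖₂²`, `Z ∼ N(0,I_ℓ)`. -/
def tvRiskZero (s : ℝ × ℝ) (ℓ : ℕ) (τ : ℝ) : ℝ≥0∞ :=
  ∫⁻ z, ENNReal.ofReal (∑ i, (η s ℓ τ z i) ^ 2) ∂(stdGaussian ℓ)

/-- The minimax MSE `M(F_{N,ε,TV}(L)|TV)
= (1/N) inf_{τ≥0} sup_{ν ∈ F_{N,ε,TV}(L)} E ‖X − η^tv(X+Z;τ)‖₂²`,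
where `η^tv = η^tv_{(0,0)}` is the plain TV denoiser. -/
def tvMSE (N : ℕ) (ε : ℝ) (L : ℕ) : ℝ≥0∞ :=
  (N : ℝ≥0∞)⁻¹ *
    ⨅ (τ : ℝ) (_ : 0 ≤ τ), ⨆ ν ∈ tvClass N ε L,
      ∫⁻ p, ENNReal.ofReal (∑ i, (p.1 i - η (0, 0) N τ (p.1 + p.2) i) ^ 2)
        ∂(ν.prod (stdGaussian N))

/-- The limiting variational value
`inf_{τ≥0} max_π { ε Σ_{ℓ,s} π_{ℓ,s} r_s(ℓ;τ) }`, the maximum being over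
probability distributions `π` on `{1,…,L}×{++,+−}` with
`Σ_{ℓ,s} ℓ π_{ℓ,s} = 1/ε`. -/
def tvLimitVal (ε : ℝ) (L : ℕ) : ℝ≥0∞ :=
  ⨅ (τ : ℝ) (_ : 0 ≤ τ),
    ⨆ (πp : ℕ → ℝ≥0∞) (πm : ℕ → ℝ≥0∞)
      (_ : (∀ ℓ : ℕ, (ℓ = 0 ∨ L < ℓ) → πp ℓ = 0 ∧ πm ℓ = 0) ∧
        (∑' ℓ : ℕ, (πp ℓ + πm ℓ)) = 1 ∧
        (∑' ℓ : ℕ, (ℓ : ℝ≥0∞) * (πp ℓ + πm ℓ)) = ENNReal.ofReal (1 / ε)),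
      ENNReal.ofReal ε *
        ∑' ℓ : ℕ, (πp ℓ * tvRiskZero η (1, 1) ℓ τ +
          πm ℓ * tvRiskZero η (1, -1) ℓ τ)

end

/-!
The errors `x - η^tv(x + z; τ)` of the plain denoiser are proximal points of the convex function
`e ↦ τ (‖x + e‖_TV - ‖x‖_TV)`. This function dominates the sum, over the maximal constant segments
of `x`, of the segmentwise total variations with signed boundary terms, where the signs are those of
the jumps of `x`; the two functions agree as long as `e` does not overturn a jump. Both the bound
`E ‖x - η^tv(x + Z; τ)‖₂² ≤ Σ_segments r_s(ℓ; τ)` and its sharpness for `n x`, `n → ∞`, follow.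

The worst prior thus maximises a linear functional of the law of the segment lengths under a
constraint on their mean. The upper bound uses an optimal dual certificate, an affine majorant of
`ℓ ↦ max_s r_s(ℓ; τ)`; the lower bound uses mixtures of large periodic staircases, monotone ones for
`+-` segments and square waves for `++` segments.
-/

section Prox

open scoped Topology

variable {ι : Type*} [Fintype ι] {f g : (ι → ℝ) → ℝ} {z e e' : ι → ℝ}

/-- `e` is a proximal point of `f` at `z`, i.e. a minimiser of `w ↦ ½‖z - w‖₂² + f w`. The Euclidean
norm is spelled out because the norm of `ι → ℝ` is the sup norm. -/
def IsProx (f : (ι → ℝ) → ℝ) (z e : ι → ℝ) : Prop :=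
  ∀ w, 1 / 2 * ∑ i, (z i - e i) ^ 2 + f e ≤ 1 / 2 * ∑ i, (z i - w i) ^ 2 + f w

theorem convexOn_of_sublinear {E : Type*} [AddCommGroup E] [Module ℝ E] {f : E → ℝ}
    (hadd : ∀ x y, f (x + y) ≤ f x + f y) (hsmul : ∀ t x, 0 ≤ t → f (t • x) = t * f x) :
    ConvexOn ℝ Set.univ f :=
  ⟨convex_univ, fun x _ y _ a b ha hb _ => by
    simpa only [hsmul _ _ ha, hsmul _ _ hb, smul_eq_mul] using hadd (a • x) (b • y)⟩

/-- Compare `e` with the points `e + t (w - e)` and let `t → 0+`. -/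
theorem IsProx.dotProduct_le (he : IsProx f z e) (hf : ConvexOn ℝ Set.univ f) (w : ι → ℝ) :
    (z - e) ⬝ᵥ (w - e) ≤ f w - f e := by
  set K := 1 / 2 * ∑ i, (w i - e i) ^ 2
  have hlim : Tendsto (fun t : ℝ => f w - f e + t * K) (𝓝[>] 0) (𝓝 (f w - f e)) :=
    ((Continuous.tendsto' (by fun_prop) 0 _ (by simp)).mono_left nhdsWithin_le_nhds)
  refine ge_of_tendsto hlim ?_
  filter_upwards [Ioc_mem_nhdsGT (zero_lt_one' ℝ)] with t ⟨ht0, ht1⟩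
  have hmin := he ((1 - t) • e + t • w)
  have hconv := hf.2 (Set.mem_univ e) (Set.mem_univ w) (sub_nonneg.2 ht1) ht0.le (by ring)
  have hexp : 1 / 2 * ∑ i, (z i - ((1 - t) • e + t • w) i) ^ 2 =
      1 / 2 * ∑ i, (z i - e i) ^ 2 - t * (z - e) ⬝ᵥ (w - e) + t ^ 2 * K := by
    simp only [K, dotProduct, Finset.mul_sum, ← Finset.sum_add_distrib, ← Finset.sum_sub_distrib]
    refine Finset.sum_congr rfl fun i _ => ?_
    simp only [Pi.add_apply, Pi.sub_apply, Pi.smul_apply, smul_eq_mul]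
    ring
  simp only [smul_eq_mul] at hconv
  refine le_of_mul_le_mul_left ?_ ht0
  linarith

theorem IsProx.eq (he : IsProx f z e) (he' : IsProx f z e') (hf : ConvexOn ℝ Set.univ f) :
    e = e' := by
  have hsum : (z - e) ⬝ᵥ (e' - e) + (z - e') ⬝ᵥ (e - e') = (e' - e) ⬝ᵥ (e' - e) := by
    simp only [dotProduct, ← Finset.sum_add_distrib, Pi.sub_apply]
    exact Finset.sum_congr rfl fun i _ => by ring
  have hle := he.dotProduct_le hf e'
  have hle' := he'.dotProduct_le hf e
  have hzero : (e' - e) ⬝ᵥ (e' - e) = 0 :=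
    le_antisymm (by linarith) (Finset.sum_nonneg fun i _ => mul_self_nonneg _)
  exact (sub_eq_zero.1 (dotProduct_self_eq_zero.1 hzero)).symm

theorem IsProx.of_le (he : IsProx g z e) (hgf : ∀ w, g w ≤ f w) (heq : f e = g e) :
    IsProx f z e := fun w => by
  have := he w
  have := hgf w
  linarith

theorem IsProx.sum_sq_le_of_dotProduct_le {v : ι → ℝ} (he : IsProx f z e)
    (hf : ConvexOn ℝ Set.univ f) (hf0 : f 0 = 0) (hv : v ⬝ᵥ e ≤ f e) :
    ∑ i, e i ^ 2 ≤ ∑ i, (z i - v i) ^ 2 := by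
  have hle := he.dotProduct_le hf 0
  have hexp : ∑ i, (z i - v i) ^ 2 - ∑ i, e i ^ 2 =
      ∑ i, (z i - v i - e i) ^ 2 - 2 * ((z - e) ⬝ᵥ (0 - e) + v ⬝ᵥ e) := by
    simp only [dotProduct, ← Finset.sum_add_distrib, ← Finset.sum_sub_distrib, Finset.mul_sum,
      Pi.sub_apply, Pi.zero_apply]
    exact Finset.sum_congr rfl fun i _ => by ring
  have hsq : 0 ≤ ∑ i, (z i - v i - e i) ^ 2 := Finset.sum_nonneg fun i _ => sq_nonneg _
  linarith

theorem IsProx.sum_sq_le (he : IsProx f z e) (he' : IsProx g z e') (hf : ConvexOn ℝ Set.univ f)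
    (hg : ConvexOn ℝ Set.univ g) (hf0 : f 0 = 0) (hadd : ∀ x y, g (x + y) ≤ g x + g y)
    (hgf : g e ≤ f e) : ∑ i, e i ^ 2 ≤ ∑ i, e' i ^ 2 := by
  have hle := he'.dotProduct_le hg (e' + e)
  rw [add_sub_cancel_left] at hle
  have hsq := he.sum_sq_le_of_dotProduct_le (v := z - e') hf hf0 (by linarith [hadd e' e])
  simpa only [Pi.sub_apply, _root_.sub_sub_cancel] using hsq

theorem isProx_dotProduct (v z : ι → ℝ) : IsProx (fun w => v ⬝ᵥ w) z (z - v) := fun w => by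
  have hexp : 1 / 2 * ∑ i, (z i - w i) ^ 2 + v ⬝ᵥ w =
      1 / 2 * ∑ i, (z i - (z - v) i) ^ 2 + v ⬝ᵥ (z - v) + 1 / 2 * ∑ i, (w i - (z - v) i) ^ 2 := by
    simp only [dotProduct, ← Finset.sum_add_distrib, Finset.mul_sum, Pi.sub_apply]
    exact Finset.sum_congr rfl fun i _ => by ring
  have hsq : 0 ≤ ∑ i, (w i - (z - v) i) ^ 2 := Finset.sum_nonneg fun i _ => sq_nonneg _
  linarith

end Prox

section Penalty

theorem extz_of_lt {N i : ℕ} (x : Fin N → ℝ) (hi : i < N) : extz N x i = x ⟨i, hi⟩ :=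
  dif_pos hi

theorem extz_add (N : ℕ) (x y : Fin N → ℝ) (i : ℕ) :
    extz N (x + y) i = extz N x i + extz N y i := by
  unfold extz; split_ifs <;> simp

theorem extz_smul (N : ℕ) (t : ℝ) (x : Fin N → ℝ) (i : ℕ) :
    extz N (t • x) i = t * extz N x i := by
  unfold extz; split_ifs <;> simp

/-- The forward difference `x_{i+1} - x_i`, with `x` extended by zero. -/
def jump (N : ℕ) (x : Fin N → ℝ) (i : ℕ) : ℝ := extz N x (i + 1) - extz N x i

theorem jump_add (N : ℕ) (x y : Fin N → ℝ) (i : ℕ) :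
    jump N (x + y) i = jump N x i + jump N y i := by
  simp only [jump, extz_add]; ring

theorem jump_smul (N : ℕ) (t : ℝ) (x : Fin N → ℝ) (i : ℕ) :
    jump N (t • x) i = t * jump N x i := by
  simp only [jump, extz_smul, mul_sub]

theorem tvNorm_eq_sum_abs_jump (N : ℕ) (x : Fin N → ℝ) :
    tvNorm N x = ∑ i ∈ Finset.range (N - 1), |jump N x i| := rfl

theorem tvNorm_nonneg (N : ℕ) (x : Fin N → ℝ) : 0 ≤ tvNorm N x :=
  Finset.sum_nonneg fun _ _ => abs_nonneg _

theorem tvNorm_add_le (N : ℕ) (x y : Fin N → ℝ) :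
    tvNorm N (x + y) ≤ tvNorm N x + tvNorm N y := by
  simp only [tvNorm_eq_sum_abs_jump, jump_add, ← Finset.sum_add_distrib]
  exact Finset.sum_le_sum fun i _ => abs_add_le _ _

theorem tvNorm_smul (N : ℕ) (t : ℝ) (x : Fin N → ℝ) : tvNorm N (t • x) = |t| * tvNorm N x := by
  simp only [tvNorm_eq_sum_abs_jump, jump_smul, abs_mul, Finset.mul_sum]

/-- The penalty `‖x‖_TV + s₁ x₁ + s₂ x_N` of the boundary-signed denoiser. -/
def tvPen (s : ℝ × ℝ) (N : ℕ) (x : Fin N → ℝ) : ℝ :=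
  tvNorm N x + (s.1 * extz N x 0 + s.2 * extz N x (N - 1))

theorem tvPen_zero_zero (N : ℕ) (x : Fin N → ℝ) : tvPen (0, 0) N x = tvNorm N x := by
  simp [tvPen]

theorem tvObj_eq (s : ℝ × ℝ) (N : ℕ) (τ : ℝ) (y x : Fin N → ℝ) :
    tvObj s N τ y x = 1 / 2 * ∑ i, (y i - x i) ^ 2 + τ * tvPen s N x := by
  unfold tvObj tvPen; ring

theorem tvPen_add_le (s : ℝ × ℝ) (N : ℕ) (x y : Fin N → ℝ) :
    tvPen s N (x + y) ≤ tvPen s N x + tvPen s N y := by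
  have := tvNorm_add_le N x y
  simp only [tvPen, extz_add]
  linarith

theorem tvPen_smul (s : ℝ × ℝ) (N : ℕ) {t : ℝ} (ht : 0 ≤ t) (x : Fin N → ℝ) :
    tvPen s N (t • x) = t * tvPen s N x := by
  simp only [tvPen, tvNorm_smul, extz_smul, abs_of_nonneg ht]; ring

theorem tvPen_zero (s : ℝ × ℝ) (N : ℕ) : tvPen s N 0 = 0 := by
  simpa using tvPen_smul s N le_rfl 0

theorem tvPen_neg_neg (s : ℝ × ℝ) (N : ℕ) (x : Fin N → ℝ) : tvPen (-s) N (-x) = tvPen s N x := by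
  rw [← neg_one_smul ℝ x]
  simp only [tvPen, tvNorm_smul, extz_smul, abs_neg, abs_one, Prod.fst_neg, Prod.snd_neg]
  ring

theorem convexOn_tvPen (s : ℝ × ℝ) (N : ℕ) : ConvexOn ℝ Set.univ (tvPen s N) :=
  convexOn_of_sublinear (tvPen_add_le s N) fun _ x ht => tvPen_smul s N ht x

theorem convexOn_tvNorm_add_sub (N : ℕ) (x : Fin N → ℝ) :
    ConvexOn ℝ Set.univ fun e => tvNorm N (x + e) - tvNorm N x := by
  simp only [← tvPen_zero_zero]
  exact ((convexOn_tvPen (0, 0) N).translate_right x).add_const (-tvPen (0, 0) N x)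

/-- The vector `s₁ e₁ + s₂ e_N` of `ℝ^N`. -/
def boundaryVec (s : ℝ × ℝ) (N : ℕ) : Fin N → ℝ := fun i =>
  (if (i : ℕ) = 0 then s.1 else 0) + if (i : ℕ) = N - 1 then s.2 else 0

theorem boundaryVec_dotProduct (s : ℝ × ℝ) (N : ℕ) (w : Fin N → ℝ) :
    boundaryVec s N ⬝ᵥ w = s.1 * extz N w 0 + s.2 * extz N w (N - 1) := by
  rcases N with - | N
  · simp [extz, dotProduct]
  · have hfirst (i : Fin (N + 1)) : (i : ℕ) = 0 ↔ i = 0 := by simp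
    have hlast (i : Fin (N + 1)) : (i : ℕ) = N ↔ i = Fin.last N :=
      (Fin.ext_iff (b := Fin.last N)).symm
    simp only [dotProduct, boundaryVec, Nat.add_sub_cancel, hfirst, hlast, add_mul, ite_mul,
      zero_mul, Finset.sum_add_distrib, Finset.sum_ite_eq', Finset.mem_univ, if_true,
      extz_of_lt w N.succ_pos, extz_of_lt w N.lt_succ_self]
    rfl

end Penalty

section Denoiser

/-- `η s N τ y` minimises the boundary-signed TV objective at `y`, for all `s`, `N`, `y` and all
`τ ≥ 0`. -/
def IsTVDenoiser (η : (ℝ × ℝ) → ∀ N : ℕ, ℝ → (Fin N → ℝ) → (Fin N → ℝ)) : Prop :=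
  ∀ (s : ℝ × ℝ) (N : ℕ) (τ : ℝ), 0 ≤ τ → ∀ y x : Fin N → ℝ,
    tvObj s N τ y (η s N τ y) ≤ tvObj s N τ y x

variable {η : (ℝ × ℝ) → ∀ N : ℕ, ℝ → (Fin N → ℝ) → (Fin N → ℝ)} {N : ℕ} {τ : ℝ}

namespace IsTVDenoiser

theorem isProx (hη : IsTVDenoiser η) (s : ℝ × ℝ) (hτ : 0 ≤ τ) (y : Fin N → ℝ) :
    IsProx (fun w => τ * tvPen s N w) y (η s N τ y) := fun w => by
  simpa only [tvObj_eq] using hη s N τ hτ y w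

theorem isProx_error (hη : IsTVDenoiser η) (hτ : 0 ≤ τ) (x z : Fin N → ℝ) :
    IsProx (fun e => τ * (tvNorm N (x + e) - tvNorm N x)) z (η (0, 0) N τ (x + z) - x) :=
  fun w => by
  have h := hη.isProx (0, 0) hτ (x + z) (x + w)
  simp only [tvPen_zero_zero, Pi.add_apply, add_sub_add_left_eq_sub] at h
  simp only [add_sub_cancel, Pi.sub_apply, ← sub_add, sub_add_eq_add_sub, add_comm (z _)]
  linarith

theorem neg (hη : IsTVDenoiser η) (s : ℝ × ℝ) (hτ : 0 ≤ τ) (z : Fin N → ℝ) :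
    η (-s) N τ z = -η s N τ (-z) := by
  refine (hη.isProx (-s) hτ z).eq (fun w => ?_) ((convexOn_tvPen (-s) N).smul hτ)
  have h := hη.isProx s hτ (-z) (-w)
  have hsq (a b : ℝ) : (-a - b) ^ 2 = (a - -b) ^ 2 := by ring
  simpa only [← tvPen_neg_neg s, Pi.neg_apply, hsq, neg_neg] using h

theorem sum_sq_le (hη : IsTVDenoiser η) (s : ℝ × ℝ) (hτ : 0 ≤ τ) (z : Fin N → ℝ) :
    ∑ i, η s N τ z i ^ 2 ≤ ∑ i, (z i - (τ • boundaryVec s N) i) ^ 2 := by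
  refine (hη.isProx s hτ z).sum_sq_le_of_dotProduct_le ((convexOn_tvPen s N).smul hτ) ?_ ?_
  · simp only [tvPen_zero, mul_zero]
  · rw [smul_dotProduct, boundaryVec_dotProduct, smul_eq_mul]
    exact mul_le_mul_of_nonneg_left (le_add_of_nonneg_left (tvNorm_nonneg N _)) hτ

theorem eq_sub_of_one (hη : IsTVDenoiser η) (s : ℝ × ℝ) (hτ : 0 ≤ τ) (z : Fin 1 → ℝ) :
    η s 1 τ z = z - τ • boundaryVec s 1 := by
  refine (hη.isProx s hτ z).eq ?_ ((convexOn_tvPen s 1).smul hτ)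
  convert isProx_dotProduct (τ • boundaryVec s 1) z using 2 with w
  simp [smul_dotProduct, boundaryVec_dotProduct, tvPen, tvNorm]

end IsTVDenoiser

end Denoiser

section Blocks

/-- `0 = b 0 < b 1 < ⋯ < b (m + 1) = N`: the end points of `m + 1` consecutive blocks
`[b j, b (j + 1))`, `j ≤ m`, of `{0, …, N - 1}`. -/
structure IsBlocks (N m : ℕ) (b : ℕ → ℕ) : Prop where
  zero : b 0 = 0
  last : b (m + 1) = N
  lt : ∀ j ≤ m, b j < b (j + 1)

/-- The restriction of a vector to its `j`-th block. -/
def blk (N : ℕ) (b : ℕ → ℕ) (j : ℕ) (u : Fin N → ℝ) : Fin (b (j + 1) - b j) → ℝ :=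
  fun k => extz N u (b j + k)

variable {N m : ℕ} {b : ℕ → ℕ}

theorem IsBlocks.le (hb : IsBlocks N m b) {i j : ℕ} (hij : i ≤ j) (hj : j ≤ m + 1) :
    b i ≤ b j := by
  induction j, hij using Nat.le_induction with
  | base => exact le_rfl
  | succ j _ ih => exact (ih (by omega)).trans (hb.lt j (by omega)).le

theorem extz_blk (u : Fin N → ℝ) {j k : ℕ} (hk : k < b (j + 1) - b j) :
    extz _ (blk N b j u) k = extz N u (b j + k) := extz_of_lt _ hk

theorem blk_add (j : ℕ) (u v : Fin N → ℝ) : blk N b j (u + v) = blk N b j u + blk N b j v :=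
  funext fun _ => extz_add N u v _

theorem blk_smul (j : ℕ) (t : ℝ) (u : Fin N → ℝ) : blk N b j (t • u) = t • blk N b j u :=
  funext fun _ => extz_smul N t u _

theorem IsBlocks.exists_blk_eq (hb : IsBlocks N m b) (c : ∀ j, Fin (b (j + 1) - b j) → ℝ) :
    ∃ u : Fin N → ℝ, ∀ j ≤ m, blk N b j u = c j := by
  let idx (i : ℕ) : ℕ := Nat.findGreatest (fun j => b j ≤ i) m
  refine ⟨fun i => extz _ (c (idx i)) (i - b (idx i)), fun j hj => funext fun k => ?_⟩
  have hk := k.2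
  have hlt : b j + k < N := by
    have := hb.last ▸ hb.le (i := j + 1) (by omega) le_rfl
    omega
  have hidx : idx (b j + k) = j := by
    refine Nat.findGreatest_eq_iff.2 ⟨hj, fun _ => by omega, fun n hjn hn => ?_⟩
    have := hb.le (i := j + 1) hjn (by omega)
    omega
  rw [blk, extz_of_lt _ hlt, hidx, Nat.add_sub_cancel_left, extz_of_lt _ hk]

theorem IsBlocks.sum_range_eq {M : Type*} [AddCommMonoid M] (hb : IsBlocks N m b) (d : ℕ → M) :
    ∑ i ∈ Finset.range N, d i =
      ∑ j ∈ Finset.range (m + 1), ∑ k ∈ Finset.range (b (j + 1) - b j), d (b j + k) := by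
  have key : ∀ n ≤ m + 1, ∑ i ∈ Finset.range (b n), d i =
      ∑ j ∈ Finset.range n, ∑ k ∈ Finset.range (b (j + 1) - b j), d (b j + k) := by
    intro n hn
    induction n with
    | zero => simp [hb.zero]
    | succ n ih =>
      rw [Finset.sum_range_succ, ← ih (by omega), ← Finset.sum_Ico_eq_sum_range,
        Finset.sum_range_add_sum_Ico _ (hb.lt n (by omega)).le]
  rw [← hb.last, key (m + 1) le_rfl]

theorem IsBlocks.sum_range_sub_one_eq {M : Type*} [AddCancelCommMonoid M] (hb : IsBlocks N m b)
    (d : ℕ → M) :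
    ∑ i ∈ Finset.range (N - 1), d i =
      ∑ j ∈ Finset.range (m + 1), ∑ k ∈ Finset.range (b (j + 1) - b j - 1), d (b j + k) +
        ∑ j ∈ Finset.range m, d (b (j + 1) - 1) := by
  have hsplit {n p : ℕ} (h : n < p) : ∑ k ∈ Finset.range (p - n), d (n + k) =
      ∑ k ∈ Finset.range (p - n - 1), d (n + k) + d (p - 1) := by
    conv_lhs => rw [show p - n = p - n - 1 + 1 by omega, Finset.sum_range_succ,
      show n + (p - n - 1) = p - 1 by omega]
  have hN : 0 < N := hb.last ▸ (Nat.zero_le _).trans_lt (hb.lt m le_rfl)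
  refine add_right_cancel (b := d (N - 1)) ?_
  rw [← Finset.sum_range_succ, Nat.sub_add_cancel hN, hb.sum_range_eq, Finset.sum_congr rfl
    fun j hj => hsplit (hb.lt j (Nat.lt_succ_iff.1 (Finset.mem_range.1 hj))),
    Finset.sum_add_distrib, Finset.sum_range_succ (fun j => d (b (j + 1) - 1)), hb.last, add_assoc]

theorem IsBlocks.sum_eq_sum_blk (hb : IsBlocks N m b) (h : ℝ → ℝ → ℝ) (u v : Fin N → ℝ) :
    ∑ i, h (u i) (v i) =
      ∑ j ∈ Finset.range (m + 1), ∑ k, h (blk N b j u k) (blk N b j v k) := by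
  calc ∑ i, h (u i) (v i) = ∑ i : Fin N, h (extz N u i) (extz N v i) := by
        simp only [extz_of_lt _ (Fin.is_lt _)]
    _ = ∑ i ∈ Finset.range N, h (extz N u i) (extz N v i) :=
        Fin.sum_univ_eq_sum_range (fun i => h (extz N u i) (extz N v i)) N
    _ = ∑ j ∈ Finset.range (m + 1), ∑ k ∈ Finset.range (b (j + 1) - b j),
          h (extz N u (b j + k)) (extz N v (b j + k)) := hb.sum_range_eq _
    _ = _ := by
        refine Finset.sum_congr rfl fun j _ => ?_
        exact (Fin.sum_univ_eq_sum_range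
          (fun k => h (extz N u (b j + k)) (extz N v (b j + k))) _).symm

theorem IsBlocks.tvNorm_eq (hb : IsBlocks N m b) (u : Fin N → ℝ) :
    tvNorm N u =
      ∑ j ∈ Finset.range (m + 1), ∑ k ∈ Finset.range (b (j + 1) - b j - 1), |jump N u (b j + k)| +
        ∑ j ∈ Finset.range m, |jump N u (b (j + 1) - 1)| :=
  hb.sum_range_sub_one_eq _

/-- The block-separable penalty in which the jump from block `j` to block `j + 1` is charged
linearly, with sign `σ (j + 1)`. -/
def blockPen (N m : ℕ) (b : ℕ → ℕ) (σ : ℕ → ℝ) (u : Fin N → ℝ) : ℝ :=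
  ∑ j ∈ Finset.range (m + 1), tvPen (σ j, -σ (j + 1)) _ (blk N b j u)

theorem blockPen_add_le (σ : ℕ → ℝ) (u v : Fin N → ℝ) :
    blockPen N m b σ (u + v) ≤ blockPen N m b σ u + blockPen N m b σ v := by
  simp only [blockPen, blk_add, ← Finset.sum_add_distrib]
  exact Finset.sum_le_sum fun j _ => tvPen_add_le _ _ _ _

theorem convexOn_blockPen (σ : ℕ → ℝ) : ConvexOn ℝ Set.univ (blockPen N m b σ) :=
  convexOn_of_sublinear (blockPen_add_le σ) fun t u ht => by
    simp only [blockPen, blk_smul, tvPen_smul _ _ ht, Finset.mul_sum]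

theorem IsBlocks.tvPen_blk (hb : IsBlocks N m b) {j : ℕ} (hj : j ≤ m) (s : ℝ × ℝ)
    (u : Fin N → ℝ) :
    tvPen s _ (blk N b j u) =
      ∑ k ∈ Finset.range (b (j + 1) - b j - 1), |jump N u (b j + k)| +
        (s.1 * extz N u (b j) + s.2 * extz N u (b (j + 1) - 1)) := by
  have hlt := hb.lt j hj
  rw [tvPen, extz_blk u (by omega), extz_blk u (by omega), add_zero,
    show b j + (b (j + 1) - b j - 1) = b (j + 1) - 1 by omega]
  congr 1
  refine Finset.sum_congr rfl fun k hk => ?_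
  have hk := Finset.mem_range.1 hk
  rw [extz_blk u (by omega), extz_blk u (by omega), jump, add_assoc]

/-- Summation by parts: the boundary terms of adjacent blocks combine into jumps. -/
theorem IsBlocks.blockPen_eq (hb : IsBlocks N m b) {σ : ℕ → ℝ} (hσ0 : σ 0 = 0)
    (hσm : σ (m + 1) = 0) (u : Fin N → ℝ) :
    blockPen N m b σ u =
      ∑ j ∈ Finset.range (m + 1), ∑ k ∈ Finset.range (b (j + 1) - b j - 1), |jump N u (b j + k)| +
        ∑ j ∈ Finset.range m, σ (j + 1) * jump N u (b (j + 1) - 1) := by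
  rw [blockPen, Finset.sum_congr rfl fun j hj =>
    hb.tvPen_blk (Nat.lt_succ_iff.1 (Finset.mem_range.1 hj)) _ u, Finset.sum_add_distrib]
  congr 1
  rw [Finset.sum_add_distrib, Finset.sum_range_succ', hσ0, zero_mul, add_zero,
    Finset.sum_range_succ (fun j => -σ (j + 1) * _), hσm, neg_zero, zero_mul, add_zero,
    ← Finset.sum_add_distrib]
  refine Finset.sum_congr rfl fun j hj => ?_
  have hlt := hb.lt j (Finset.mem_range.1 hj).le
  rw [jump, Nat.sub_add_cancel (by omega)]
  ring

end Blocks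

section Staircase

/-- `x` is constant on each of the blocks cut out by `b` and `σ (j + 1) = ±1` is the sign of its
jump from block `j` to block `j + 1`, for `j < m`. The signs at the two ends are set to `0`, so that
block `j` always carries the boundary signs `(σ j, -σ (j + 1))`. -/
structure IsStaircase (N m : ℕ) (b : ℕ → ℕ) (σ : ℕ → ℝ) (x : Fin N → ℝ) : Prop
    extends IsBlocks N m b where
  sign_zero : σ 0 = 0
  sign_last : σ (m + 1) = 0
  abs_sign : ∀ j < m, |σ (j + 1)| = 1
  flat : ∀ j ≤ m, ∀ k < b (j + 1) - b j - 1, jump N x (b j + k) = 0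
  sign_mul_jump_pos : ∀ j < m, 0 < σ (j + 1) * jump N x (b (j + 1) - 1)

theorem mul_le_abs_add_sub_abs {s a : ℝ} (hs : |s| = 1) (ha : 0 < s * a) (c : ℝ) :
    s * c ≤ |a + c| - |a| := by
  have h₁ : |a| = s * a := by rw [← abs_of_pos ha, abs_mul, hs, one_mul]
  have h₂ : s * (a + c) ≤ |a + c| := by simpa [abs_mul, hs] using le_abs_self (s * (a + c))
  linarith

theorem mul_eq_abs_add_sub_abs {s a c : ℝ} (hs : |s| = 1) (ha : 0 < s * a) (hc : |c| ≤ |a|) :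
    s * c = |a + c| - |a| := by
  have h₁ : |a| = s * a := by rw [← abs_of_pos ha, abs_mul, hs, one_mul]
  have h₂ : -|c| ≤ s * c := by simpa [abs_mul, hs] using neg_abs_le (s * c)
  have h₃ : |a + c| = s * (a + c) := by
    rw [← abs_of_nonneg (show 0 ≤ s * (a + c) by linarith), abs_mul, hs, one_mul]
  linarith

variable {η : (ℝ × ℝ) → ∀ N : ℕ, ℝ → (Fin N → ℝ) → (Fin N → ℝ)}
variable {N m : ℕ} {b : ℕ → ℕ} {σ : ℕ → ℝ} {x : Fin N → ℝ} {τ : ℝ}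

namespace IsStaircase

theorem smul (hx : IsStaircase N m b σ x) {c : ℝ} (hc : 0 < c) :
    IsStaircase N m b σ (c • x) where
  __ := hx
  flat j hj k hk := by rw [jump_smul, hx.flat j hj k hk, mul_zero]
  sign_mul_jump_pos j hj := by
    rw [jump_smul, mul_left_comm]
    exact mul_pos hc (hx.sign_mul_jump_pos j hj)

theorem tvNorm_add_sub (hx : IsStaircase N m b σ x) (e : Fin N → ℝ) :
    tvNorm N (x + e) - tvNorm N x =
      ∑ j ∈ Finset.range (m + 1), ∑ k ∈ Finset.range (b (j + 1) - b j - 1), |jump N e (b j + k)| +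
        ∑ j ∈ Finset.range m, (|jump N x (b (j + 1) - 1) + jump N e (b (j + 1) - 1)| -
          |jump N x (b (j + 1) - 1)|) := by
  have hflat (j) (hj : j ∈ Finset.range (m + 1)) (k)
      (hk : k ∈ Finset.range (b (j + 1) - b j - 1)) : jump N x (b j + k) = 0 :=
    hx.flat j (Nat.lt_succ_iff.1 (Finset.mem_range.1 hj)) k (Finset.mem_range.1 hk)
  rw [hx.tvNorm_eq, hx.tvNorm_eq, Finset.sum_sub_distrib, add_sub_add_comm,
    ← Finset.sum_sub_distrib]
  simp only [jump_add]
  congr 1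
  refine Finset.sum_congr rfl fun j hj => ?_
  rw [← Finset.sum_sub_distrib]
  exact Finset.sum_congr rfl fun k hk => by simp [hflat j hj k hk]

theorem blockPen_le (hx : IsStaircase N m b σ x) (e : Fin N → ℝ) :
    blockPen N m b σ e ≤ tvNorm N (x + e) - tvNorm N x := by
  rw [hx.tvNorm_add_sub, hx.blockPen_eq hx.sign_zero hx.sign_last]
  gcongr with j hj
  have hj := Finset.mem_range.1 hj
  exact mul_le_abs_add_sub_abs (hx.abs_sign j hj) (hx.sign_mul_jump_pos j hj) _

theorem blockPen_eq_tvNorm_add_sub (hx : IsStaircase N m b σ x) {e : Fin N → ℝ}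
    (he : ∀ j < m, |jump N e (b (j + 1) - 1)| ≤ |jump N x (b (j + 1) - 1)|) :
    blockPen N m b σ e = tvNorm N (x + e) - tvNorm N x := by
  rw [hx.tvNorm_add_sub, hx.blockPen_eq hx.sign_zero hx.sign_last]
  congr 1
  refine Finset.sum_congr rfl fun j hj => ?_
  have hj := Finset.mem_range.1 hj
  exact mul_eq_abs_add_sub_abs (hx.abs_sign j hj) (hx.sign_mul_jump_pos j hj) (he j hj)

end IsStaircase

variable (η) in
/-- The squared error `‖x - η^tv(x + z; τ)‖₂²` of the plain TV denoiser. -/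
def sqError (N : ℕ) (τ : ℝ) (x z : Fin N → ℝ) : ℝ :=
  ∑ i, (x i - η (0, 0) N τ (x + z) i) ^ 2

variable (η) in
/-- The squared norm of the vector obtained by applying to each block of the noise `z` the denoiser
with the boundary signs of that block. -/
def blockError (N m : ℕ) (b : ℕ → ℕ) (σ : ℕ → ℝ) (τ : ℝ) (z : Fin N → ℝ) : ℝ :=
  ∑ j ∈ Finset.range (m + 1), ∑ k, η (σ j, -σ (j + 1)) _ τ (blk N b j z) k ^ 2

theorem IsTVDenoiser.exists_isProx_blockPen (hη : IsTVDenoiser η) (hb : IsBlocks N m b)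
    (σ : ℕ → ℝ) (hτ : 0 ≤ τ) (z : Fin N → ℝ) :
    ∃ e, IsProx (fun w => τ * blockPen N m b σ w) z e ∧
      ∑ i, e i ^ 2 = blockError η N m b σ τ z := by
  obtain ⟨e, he⟩ := hb.exists_blk_eq fun j => η (σ j, -σ (j + 1)) _ τ (blk N b j z)
  have hmem {j : ℕ} (hj : j ∈ Finset.range (m + 1)) : j ≤ m :=
    Nat.lt_succ_iff.1 (Finset.mem_range.1 hj)
  refine ⟨e, fun w => ?_, ?_⟩
  · rw [hb.sum_eq_sum_blk (fun p q => (p - q) ^ 2) z e,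
      hb.sum_eq_sum_blk (fun p q => (p - q) ^ 2) z w]
    simp only [blockPen, Finset.mul_sum (Finset.range _), ← Finset.sum_add_distrib]
    refine Finset.sum_le_sum fun j hj => ?_
    rw [he j (hmem hj)]
    exact hη.isProx _ hτ _ _
  · rw [hb.sum_eq_sum_blk (fun p _ => p ^ 2) e e]
    exact Finset.sum_congr rfl fun j hj => by rw [he j (hmem hj)]

theorem IsStaircase.sqError_le_blockError (hx : IsStaircase N m b σ x) (hη : IsTVDenoiser η)
    (hτ : 0 ≤ τ) (z : Fin N → ℝ) : sqError η N τ x z ≤ blockError η N m b σ τ z := by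
  obtain ⟨e, he, hsum⟩ := hη.exists_isProx_blockPen hx.toIsBlocks σ hτ z
  have hle := (hη.isProx_error hτ x z).sum_sq_le he ((convexOn_tvNorm_add_sub N x).smul hτ)
    ((convexOn_blockPen σ).smul hτ) (by simp)
    (fun u v => by simpa only [mul_add] using mul_le_mul_of_nonneg_left (blockPen_add_le σ u v) hτ)
    (mul_le_mul_of_nonneg_left (hx.blockPen_le _) hτ)
  simpa only [sqError, hsum, Pi.sub_apply, sub_sq_comm (x _)] using hle

/-- Once the jumps of `x` dominate those of the block solution, the blocks decouple exactly. -/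
theorem IsStaircase.eventually_sqError_eq (hx : IsStaircase N m b σ x) (hη : IsTVDenoiser η)
    (hτ : 0 ≤ τ) (z : Fin N → ℝ) :
    ∀ᶠ n : ℕ in atTop, sqError η N τ ((n : ℝ) • x) z = blockError η N m b σ τ z := by
  obtain ⟨e, he, hsum⟩ := hη.exists_isProx_blockPen hx.toIsBlocks σ hτ z
  have hjumps : ∀ᶠ n : ℕ in atTop, ∀ j ∈ Finset.range m,
      |jump N e (b (j + 1) - 1)| ≤ |jump N ((n : ℝ) • x) (b (j + 1) - 1)| := by
    refine (Filter.eventually_all_finset _).2 fun j hj => ?_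
    have hne := right_ne_zero_of_mul (hx.sign_mul_jump_pos j (Finset.mem_range.1 hj)).ne'
    simp only [jump_smul, abs_mul, Nat.abs_cast]
    exact (tendsto_natCast_atTop_atTop.atTop_mul_const (abs_pos.2 hne)).eventually_ge_atTop _
  filter_upwards [hjumps, eventually_gt_atTop 0] with n hn hn0
  have hnx := hx.smul (c := n) (by exact_mod_cast hn0)
  have hprox : IsProx (fun w => τ * (tvNorm N ((n : ℝ) • x + w) - tvNorm N ((n : ℝ) • x))) z e :=
    he.of_le (fun w => mul_le_mul_of_nonneg_left (hnx.blockPen_le w) hτ)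
      (by rw [hnx.blockPen_eq_tvNorm_add_sub fun j hj => hn j (Finset.mem_range.2 hj)])
  have heq := (hη.isProx_error hτ _ z).eq hprox ((convexOn_tvNorm_add_sub N _).smul hτ)
  rw [← hsum, ← heq]
  exact Finset.sum_congr rfl fun i _ => sub_sq_comm _ _

end Staircase

section ChangePoints

variable {N m L : ℕ} {b : ℕ → ℕ} {σ : ℕ → ℝ} {x : Fin N → ℝ}

theorem IsBlocks.exists_mem (hb : IsBlocks N m b) {i : ℕ} (hi : i < N) :
    ∃ j ≤ m, b j ≤ i ∧ i < b (j + 1) := by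
  have hzero : b 0 ≤ i := hb.zero.trans_le (Nat.zero_le i)
  refine ⟨Nat.findGreatest (fun j => b j ≤ i) m, Nat.findGreatest_le m,
    Nat.findGreatest_spec (P := fun j => b j ≤ i) (Nat.zero_le m) hzero, ?_⟩
  rcases (Nat.findGreatest_le (P := fun j => b j ≤ i) m).lt_or_eq with hlt | heq
  · exact not_le.1 (Nat.findGreatest_is_greatest (P := fun j => b j ≤ i) (Nat.lt_succ_self _) hlt)
  · rwa [heq, hb.last]

theorem IsStaircase.length_le_of_segOK (hx : IsStaircase N m b σ x) (hseg : segOK L N x) {j : ℕ}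
    (hj : j ≤ m) : b (j + 1) - b j ≤ L := by
  by_contra! hlong
  have hN := hx.last ▸ hx.le (i := j + 1) (by omega) le_rfl
  obtain ⟨i, hi, hiL, hne⟩ := hseg (b j) (by omega)
  have hflat := hx.flat j hj (i - b j) (by omega)
  rw [Nat.add_sub_cancel' hi] at hflat
  exact hne (sub_eq_zero.1 hflat).symm

theorem IsStaircase.segOK_of_length_le (hx : IsStaircase N m b σ x)
    (hL : ∀ j ≤ m, b (j + 1) - b j ≤ L) : segOK L N x := by
  intro i hi
  obtain ⟨j, hj, hji, hij⟩ := hx.exists_mem (by omega : i < N)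
  have hlen := hL j hj
  have hjm : j ≠ m := by
    rintro rfl
    rw [hx.last] at hlen
    omega
  have hjump := right_ne_zero_of_mul (hx.sign_mul_jump_pos j (by omega)).ne'
  exact ⟨b (j + 1) - 1, by omega, by omega, fun h => hjump (sub_eq_zero.2 h.symm)⟩

theorem changeCount_eq_sum (N : ℕ) (x : Fin N → ℝ) :
    changeCount N x = ∑ i ∈ Finset.range (N - 1), if jump N x i ≠ 0 then 1 else 0 := by
  have hjump {i : ℕ} (hi : i + 1 < N) :
      jump N x i ≠ 0 ↔ x ⟨i, by omega⟩ ≠ x ⟨i + 1, hi⟩ := by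
    rw [jump, extz_of_lt x hi, extz_of_lt x (by omega), sub_ne_zero, ne_comm]
  rw [← Finset.card_filter, ← Nat.card_eq_finsetCard]
  refine Nat.card_congr
    { toFun := fun p => ⟨p.1.1, ?_⟩
      invFun := fun i =>
        have hi := Finset.mem_filter.1 i.2
        have hlt : (i : ℕ) + 1 < N := by have := Finset.mem_range.1 hi.1; omega
        ⟨(⟨i, by omega⟩, ⟨i + 1, hlt⟩), rfl, (hjump hlt).1 hi.2⟩
      left_inv := fun ⟨⟨i, k⟩, hik, _⟩ => Subtype.ext (Prod.ext rfl (Fin.ext hik))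
      right_inv := fun i => rfl }
  obtain ⟨⟨⟨i, hi⟩, ⟨k, hk⟩⟩, rfl : i + 1 = k, hne⟩ := p
  exact Finset.mem_filter.2 ⟨Finset.mem_range.2 (by omega : i < N - 1), (hjump hk).2 hne⟩

theorem IsStaircase.changeCount_eq (hx : IsStaircase N m b σ x) : changeCount N x = m := by
  have hinner : ∀ j ∈ Finset.range (m + 1), ∑ k ∈ Finset.range (b (j + 1) - b j - 1),
      (if jump N x (b j + k) ≠ 0 then 1 else 0) = 0 := fun j hj =>
    Finset.sum_eq_zero fun k hk => if_neg <| not_not.2 <|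
      hx.flat j (Nat.lt_succ_iff.1 (Finset.mem_range.1 hj)) k (Finset.mem_range.1 hk)
  have houter : ∀ j ∈ Finset.range m, (if jump N x (b (j + 1) - 1) ≠ 0 then 1 else 0) = 1 :=
    fun j hj => if_pos <| right_ne_zero_of_mul (hx.sign_mul_jump_pos j (Finset.mem_range.1 hj)).ne'
  rw [changeCount_eq_sum, hx.sum_range_sub_one_eq, Finset.sum_eq_zero hinner,
    Finset.sum_congr rfl houter]
  simp

theorem abs_sign_eq_one {a : ℝ} (ha : a ≠ 0) : |(SignType.sign a : ℝ)| = 1 := by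
  rcases ha.lt_or_gt with h | h <;> simp [h]

theorem exists_isStaircase (hN : 0 < N) (x : Fin N → ℝ) : ∃ m b σ, IsStaircase N m b σ x := by
  classical
  -- Adding the positions `≥ N - 1` makes the set of change points infinite, so that `Nat.nth` is
  -- strictly monotone and enumerates `N - 1` right after the change points.
  let p (i : ℕ) : Prop := jump N x i ≠ 0 ∨ N - 1 ≤ i
  have hp : (Set.ofPred p).Infinite := (Set.Ici_infinite (N - 1)).mono fun i hi => Or.inr hi
  have hmono : StrictMono (Nat.nth p) := Nat.nth_strictMono hp
  let m := Nat.count p (N - 1)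
  have hlast : Nat.nth p m = N - 1 := Nat.nth_count (p := p) (Or.inr le_rfl)
  let b : ℕ → ℕ := fun j => Nat.casesOn j 0 fun i => Nat.nth p i + 1
  have hjump {j : ℕ} (hj : j < m) : jump N x (Nat.nth p j) ≠ 0 :=
    (Nat.nth_mem_of_infinite hp j).resolve_right (hlast ▸ hmono hj).not_ge
  have hbetween {i : ℕ} (j : ℕ) (hi : p i) : ¬ (b j ≤ i ∧ i + 1 < b (j + 1)) := by
    rintro ⟨h₁, h₂⟩
    rw [← Nat.nth_count hi] at h₁ h₂
    have hlt : Nat.count p i < j := hmono.lt_iff_lt.1 (Nat.succ_lt_succ_iff.1 h₂)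
    rcases j with - | j
    · omega
    · exact (hmono.monotone (Nat.lt_succ_iff.1 hlt)).not_gt h₁
  refine ⟨m, b, fun j => if j = 0 ∨ m < j then 0 else SignType.sign (jump N x (b j - 1)),
    ⟨rfl, ?_, ?_⟩, by simp, by simp, fun j hj => ?_, fun j _ k hk => ?_, fun j hj => ?_⟩
  · change Nat.nth p m + 1 = N
    omega
  · rintro (- | j) -
    · exact Nat.succ_pos _
    · exact Nat.succ_lt_succ (hmono (Nat.lt_succ_self j))
  · rw [if_neg (by omega)]
    exact abs_sign_eq_one (hjump hj)
  · by_contra hne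
    exact hbetween j (Or.inl hne) (by omega)
  · rw [if_neg (by omega), sign_mul_self]
    exact abs_pos.2 (hjump hj)

end ChangePoints

section Gaussian

instance (N : ℕ) : IsProbabilityMeasure (_root_.stdGaussian N) :=
  inferInstanceAs (IsProbabilityMeasure (Measure.pi fun _ => gaussianReal 0 1))

theorem stdGaussian_map_comp {N l : ℕ} {f : Fin l → Fin N} (hf : Function.Injective f) :
    (_root_.stdGaussian N).map (fun z => z ∘ f) = _root_.stdGaussian l := by
  have hindep := iIndepFun_pi (μ := fun _ : Fin N => gaussianReal 0 1)
    (X := fun _ => id) fun _ => aemeasurable_id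
  have heval (i : Fin N) : (_root_.stdGaussian N).map (fun z => z i) = gaussianReal 0 1 :=
    (measurePreserving_eval (fun _ : Fin N => gaussianReal 0 1) i).map_eq
  have hmap := (iIndepFun_iff_map_fun_eq_pi_map
    fun k => (measurable_pi_apply (f k)).aemeasurable).1 (hindep.precomp hf)
  exact hmap.trans (congrArg Measure.pi (funext fun k => heval (f k)))

theorem stdGaussian_map_neg (N : ℕ) :
    (_root_.stdGaussian N).map (fun z => -z) = _root_.stdGaussian N := by
  have hneg : (gaussianReal 0 1).map (fun x => -x) = gaussianReal 0 1 := by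
    rw [gaussianReal_map_neg, neg_zero]
  have (_ : Fin N) : SigmaFinite ((gaussianReal 0 1).map (fun x => -x)) := by
    rw [hneg]; infer_instance
  have h := Measure.pi_map_pi (μ := fun _ : Fin N => gaussianReal 0 1)
    (f := fun _ x => -x) fun _ => measurable_neg.aemeasurable
  rwa [hneg] at h

theorem measurable_extz (N i : ℕ) : Measurable fun u : Fin N → ℝ => extz N u i := by
  by_cases h : i < N <;> simp only [extz, h, dite_true, dite_false] <;> fun_prop

theorem measurable_blk (N : ℕ) (b : ℕ → ℕ) (j : ℕ) : Measurable (blk N b j) :=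
  measurable_pi_lambda _ fun _ => measurable_extz N _

theorem IsBlocks.stdGaussian_map_blk {N m : ℕ} {b : ℕ → ℕ} (hb : IsBlocks N m b) {j : ℕ}
    (hj : j ≤ m) :
    (_root_.stdGaussian N).map (blk N b j) = _root_.stdGaussian (b (j + 1) - b j) := by
  have hlt (k : Fin (b (j + 1) - b j)) : b j + k < N := by
    have := hb.last ▸ hb.le (i := j + 1) (by omega) le_rfl
    omega
  have hinj : Function.Injective fun k : Fin (b (j + 1) - b j) => (⟨b j + k, hlt k⟩ : Fin N) :=
    fun k k' h => Fin.ext (Nat.add_left_cancel (Fin.mk.inj h))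
  rw [← stdGaussian_map_comp hinj]
  exact congrArg (Measure.map · _) (funext₂ fun u k => extz_of_lt u (hlt k))

theorem lintegral_gaussianReal_sub_sq (c : ℝ) :
    ∫⁻ x, ENNReal.ofReal ((x - c) ^ 2) ∂(gaussianReal 0 1) = ENNReal.ofReal (1 + c ^ 2) := by
  have hL2 : MemLp (fun x : ℝ => x - c) 2 (gaussianReal 0 1) :=
    (memLp_id_gaussianReal (μ := 0) (v := 1) 2).sub (memLp_const c)
  have hmean : ∫ x, (x - c) ∂(gaussianReal 0 1) = -c := by
    have hint : Integrable (fun x : ℝ => x) (gaussianReal 0 1) :=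
      (memLp_id_gaussianReal 1).integrable le_rfl
    rw [integral_sub hint (integrable_const c)]
    simp
  have hvar : Var[fun x => x - c; gaussianReal 0 1] = 1 := by
    rw [variance_sub_const (X := fun x => x) aestronglyMeasurable_id]
    simp
  rw [← ofReal_integral_eq_lintegral_ofReal hL2.integrable_sq (ae_of_all _ fun x => sq_nonneg _)]
  rw [variance_eq_sub hL2, hmean] at hvar
  congr 1
  simp only [Pi.pow_apply] at hvar
  linarith

theorem lintegral_stdGaussian_sum_sub_sq {N : ℕ} (c : Fin N → ℝ) :
    ∫⁻ z, ENNReal.ofReal (∑ i, (z i - c i) ^ 2) ∂(_root_.stdGaussian N) =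
      ∑ i, ENNReal.ofReal (1 + c i ^ 2) := by
  simp_rw [ENNReal.ofReal_sum_of_nonneg fun _ _ => sq_nonneg _]
  rw [lintegral_finsetSum _ fun _ _ => by fun_prop]
  refine Finset.sum_congr rfl fun i _ => ?_
  rw [← lintegral_gaussianReal_sub_sq (c i)]
  exact (measurePreserving_eval (fun _ : Fin N => gaussianReal 0 1) i).lintegral_comp
    (f := fun x => ENNReal.ofReal ((x - c i) ^ 2)) (by fun_prop)

end Gaussian

section RiskAtZero

variable {η : (ℝ × ℝ) → ∀ N : ℕ, ℝ → (Fin N → ℝ) → (Fin N → ℝ)}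
variable {N m : ℕ} {b : ℕ → ℕ} {s : ℝ × ℝ} {τ : ℝ}

theorem measurable_sum_sq (hmeas : Measurable (η s N τ)) :
    Measurable fun z => ENNReal.ofReal (∑ i, η s N τ z i ^ 2) := by
  have (i : Fin N) : Measurable fun z => η s N τ z i := (measurable_pi_apply i).comp hmeas
  fun_prop

theorem lintegral_blockError (hmeas : ∀ s N τ, Measurable (η s N τ)) (hb : IsBlocks N m b)
    (σ : ℕ → ℝ) (τ : ℝ) :
    ∫⁻ z, ENNReal.ofReal (blockError η N m b σ τ z) ∂(_root_.stdGaussian N) =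
      ∑ j ∈ Finset.range (m + 1), tvRiskZero η (σ j, -σ (j + 1)) (b (j + 1) - b j) τ := by
  simp_rw [blockError, ENNReal.ofReal_sum_of_nonneg (s := Finset.range (m + 1))
    fun _ _ => Finset.sum_nonneg fun _ _ => sq_nonneg _]
  have hblk (j : ℕ) : Measurable fun z => ENNReal.ofReal
      (∑ k, η (σ j, -σ (j + 1)) _ τ (blk N b j z) k ^ 2) :=
    (measurable_sum_sq (hmeas (σ j, -σ (j + 1)) _ τ)).comp (measurable_blk N b j)
  rw [lintegral_finsetSum _ fun j _ => hblk j]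
  refine Finset.sum_congr rfl fun j hj => ?_
  rw [tvRiskZero, ← hb.stdGaussian_map_blk (Nat.lt_succ_iff.1 (Finset.mem_range.1 hj)),
    lintegral_map (measurable_sum_sq (hmeas _ _ _)) (measurable_blk N b j)]

theorem tvRiskZero_neg (hη : IsTVDenoiser η) (hmeas : Measurable (η s N τ)) (hτ : 0 ≤ τ) :
    tvRiskZero η (-s) N τ = tvRiskZero η s N τ := by
  simp only [tvRiskZero, hη.neg s hτ, Pi.neg_apply, neg_sq]
  rw [← lintegral_map (measurable_sum_sq hmeas) measurable_neg, stdGaussian_map_neg]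

theorem tvRiskZero_le (hη : IsTVDenoiser η) (hs₁ : |s.1| ≤ 1) (hs₂ : |s.2| ≤ 1) (N : ℕ)
    (hτ : 0 ≤ τ) : tvRiskZero η s N τ ≤ ENNReal.ofReal (N * (1 + 4 * τ ^ 2)) := by
  have hbound (i : Fin N) : (τ • boundaryVec s N) i ^ 2 ≤ 4 * τ ^ 2 := by
    have hv : |boundaryVec s N i| ≤ 2 :=
      (abs_add_le _ _).trans (by split_ifs <;> norm_num <;> linarith)
    rw [Pi.smul_apply, smul_eq_mul, mul_pow, mul_comm, ← sq_abs (boundaryVec s N i)]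
    gcongr
    nlinarith [abs_nonneg (boundaryVec s N i)]
  calc tvRiskZero η s N τ
      ≤ ∫⁻ z, ENNReal.ofReal (∑ i, (z i - (τ • boundaryVec s N) i) ^ 2) ∂(_root_.stdGaussian N) :=
        lintegral_mono fun z => ENNReal.ofReal_le_ofReal (hη.sum_sq_le s hτ z)
    _ = ∑ i, ENNReal.ofReal (1 + (τ • boundaryVec s N) i ^ 2) :=
        lintegral_stdGaussian_sum_sub_sq _
    _ ≤ ∑ _i : Fin N, ENNReal.ofReal (1 + 4 * τ ^ 2) :=
        Finset.sum_le_sum fun i _ => ENNReal.ofReal_le_ofReal (by linarith [hbound i])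
    _ = ENNReal.ofReal (N * (1 + 4 * τ ^ 2)) := by
        rw [Finset.sum_const, Finset.card_univ, Fintype.card_fin, nsmul_eq_mul,
          ENNReal.ofReal_mul N.cast_nonneg, ENNReal.ofReal_natCast]

theorem tvRiskZero_one (hη : IsTVDenoiser η) (s : ℝ × ℝ) (hτ : 0 ≤ τ) :
    tvRiskZero η s 1 τ = ENNReal.ofReal (1 + τ ^ 2 * (s.1 + s.2) ^ 2) := by
  simp only [tvRiskZero, hη.eq_sub_of_one s hτ, Pi.sub_apply, lintegral_stdGaussian_sum_sub_sq]
  simp [boundaryVec, mul_pow]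

end RiskAtZero

section RiskAt

variable {η : (ℝ × ℝ) → ∀ N : ℕ, ℝ → (Fin N → ℝ) → (Fin N → ℝ)}
variable {N m : ℕ} {b : ℕ → ℕ} {σ : ℕ → ℝ} {x : Fin N → ℝ} {τ : ℝ}

variable (η) in
/-- The risk `E ‖x - η^tv(x + Z; τ)‖₂²` of the plain TV denoiser at a fixed signal `x`. -/
def riskAt (N : ℕ) (τ : ℝ) (x : Fin N → ℝ) : ℝ≥0∞ :=
  ∫⁻ z, ENNReal.ofReal (sqError η N τ x z) ∂(_root_.stdGaussian N)

theorem IsStaircase.abs_sign_le_one (hx : IsStaircase N m b σ x) {j : ℕ} (hj : j ≤ m + 1) :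
    |σ j| ≤ 1 := by
  rcases j with - | j
  · simp [hx.sign_zero]
  · rcases (Nat.succ_le_succ_iff.1 hj).lt_or_eq with h | rfl
    · exact (hx.abs_sign j h).le
    · simp [hx.sign_last]

theorem IsStaircase.riskAt_le (hx : IsStaircase N m b σ x) (hη : IsTVDenoiser η)
    (hmeas : ∀ s N τ, Measurable (η s N τ)) (hτ : 0 ≤ τ) :
    riskAt η N τ x ≤
      ∑ j ∈ Finset.range (m + 1), tvRiskZero η (σ j, -σ (j + 1)) (b (j + 1) - b j) τ :=
  (lintegral_mono fun z => ENNReal.ofReal_le_ofReal (hx.sqError_le_blockError hη hτ z)).trans_eq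
    (lintegral_blockError hmeas hx.toIsBlocks σ τ)

theorem measurable_sqError (hmeas : Measurable (η (0, 0) N τ)) :
    Measurable fun p : (Fin N → ℝ) × (Fin N → ℝ) => sqError η N τ p.1 p.2 := by
  have (i : Fin N) : Measurable fun p : (Fin N → ℝ) × (Fin N → ℝ) => η (0, 0) N τ (p.1 + p.2) i :=
    (measurable_pi_apply i).comp (hmeas.comp (by fun_prop))
  unfold sqError
  fun_prop

theorem IsStaircase.tendsto_riskAt (hx : IsStaircase N m b σ x) (hη : IsTVDenoiser η)
    (hmeas : ∀ s N τ, Measurable (η s N τ)) (hτ : 0 ≤ τ) :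
    Tendsto (fun n : ℕ => riskAt η N τ ((n : ℝ) • x)) atTop (nhds
      (∑ j ∈ Finset.range (m + 1), tvRiskZero η (σ j, -σ (j + 1)) (b (j + 1) - b j) τ)) := by
  have hfin : ∫⁻ z, ENNReal.ofReal (blockError η N m b σ τ z) ∂(_root_.stdGaussian N) ≠ ∞ := by
    rw [lintegral_blockError hmeas hx.toIsBlocks]
    refine ENNReal.sum_ne_top.2 fun j hj => ne_top_of_le_ne_top ENNReal.ofReal_ne_top
      (tvRiskZero_le hη ?_ ?_ _ hτ)
    · exact hx.abs_sign_le_one (Finset.mem_range.1 hj).le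
    · simpa using hx.abs_sign_le_one (Nat.succ_le_of_lt (Finset.mem_range.1 hj))
  rw [← lintegral_blockError hmeas hx.toIsBlocks]
  refine tendsto_lintegral_filter_of_dominated_convergence _ (.of_forall fun n => ?_) ?_ hfin
    (ae_of_all _ fun z => tendsto_nhds_of_eventually_eq ?_)
  · exact ((measurable_sqError (hmeas _ _ _)).comp measurable_prodMk_left).ennreal_ofReal
  · filter_upwards [eventually_gt_atTop 0] with n hn
    refine ae_of_all _ fun z => ENNReal.ofReal_le_ofReal ?_
    exact (hx.smul (by exact_mod_cast hn)).sqError_le_blockError hη hτ z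
  · filter_upwards [hx.eventually_sqError_eq hη hτ z] with n hn
    rw [hn]

end RiskAt

section LinearProgram

variable {ε ρ : ℝ} {L : ℕ} {w R : ℕ → ℝ≥0∞}

/-- `w` is a probability distribution with mean `1 / ε` on the segment lengths `{1, …, L}`. -/
structure IsSegmentLaw (ε : ℝ) (L : ℕ) (w : ℕ → ℝ≥0∞) : Prop where
  eq_zero : ∀ ℓ : ℕ, ℓ = 0 ∨ L < ℓ → w ℓ = 0
  mass : ∑' ℓ, w ℓ = 1
  mean : ∑' ℓ : ℕ, (ℓ : ℝ≥0∞) * w ℓ = ENNReal.ofReal (1 / ε)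

/-- The value of the linear program that maximises the mean reward `ε ∑ w ℓ R ℓ` per sample over the
laws `w` of segment lengths. -/
def segmentValue (ε : ℝ) (L : ℕ) (R : ℕ → ℝ≥0∞) : ℝ≥0∞ :=
  ⨆ (w : ℕ → ℝ≥0∞) (_ : IsSegmentLaw ε L w), ENNReal.ofReal ε * ∑' ℓ, w ℓ * R ℓ

/-- The larger of the two risks at zero `r_{++}(ℓ; τ)` and `r_{+-}(ℓ; τ)`. -/
def maxRiskZero (η : (ℝ × ℝ) → ∀ N : ℕ, ℝ → (Fin N → ℝ) → (Fin N → ℝ)) (τ : ℝ) (ℓ : ℕ) : ℝ≥0∞ :=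
  max (tvRiskZero η (1, 1) ℓ τ) (tvRiskZero η (1, -1) ℓ τ)

theorem tvLimitVal_eq_iInf_segmentValue (η : (ℝ × ℝ) → ∀ N : ℕ, ℝ → (Fin N → ℝ) → (Fin N → ℝ))
    (ε : ℝ) (L : ℕ) :
    tvLimitVal η ε L = ⨅ (τ : ℝ) (_ : 0 ≤ τ), segmentValue ε L (maxRiskZero η τ) := by
  refine iInf_congr fun τ => iInf_congr fun _ => le_antisymm ?_ ?_
  · refine iSup_le fun πp => iSup₂_le fun πm ⟨hsupp, hmass, hmean⟩ => ?_
    refine le_iSup₂_of_le (fun ℓ => πp ℓ + πm ℓ) ⟨fun ℓ hℓ => ?_, hmass, hmean⟩ ?_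
    · simp only [hsupp ℓ hℓ, add_zero]
    · gcongr with ℓ
      rw [add_mul]
      gcongr
      exacts [le_max_left _ _, le_max_right _ _]
  · refine iSup₂_le fun w hw => ?_
    let win (ℓ : ℕ) : Prop := tvRiskZero η (1, -1) ℓ τ ≤ tvRiskZero η (1, 1) ℓ τ
    classical
    have hadd (ℓ : ℕ) : (if win ℓ then w ℓ else 0) + (if win ℓ then 0 else w ℓ) = w ℓ := by
      split_ifs <;> simp
    refine le_iSup_of_le (fun ℓ => if win ℓ then w ℓ else 0) <|
      le_iSup₂_of_le (fun ℓ => if win ℓ then 0 else w ℓ) ⟨fun ℓ hℓ => ?_, ?_, ?_⟩ ?_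
    · simp only [hw.eq_zero ℓ hℓ, ite_self, and_self]
    · simp only [hadd, hw.mass]
    · simp only [hadd, hw.mean]
    · gcongr with ℓ
      by_cases h : win ℓ
      · simp only [maxRiskZero, if_pos h, max_eq_left h, zero_mul, add_zero, le_refl]
      · simp only [maxRiskZero, if_neg h, max_eq_right (not_le.1 h).le, zero_mul, zero_add, le_refl]

theorem segmentValue_le (hε : 0 < ε) (hR : ∀ ℓ : ℕ, R ℓ ≤ ENNReal.ofReal (ℓ * ρ)) :
    segmentValue ε L R ≤ ENNReal.ofReal ρ := by
  refine iSup₂_le fun w hw => ?_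
  calc ENNReal.ofReal ε * ∑' ℓ, w ℓ * R ℓ
      ≤ ENNReal.ofReal ε * ∑' ℓ : ℕ, ℓ * w ℓ * ENNReal.ofReal ρ := by
        refine mul_le_mul_right (ENNReal.tsum_le_tsum fun ℓ => ?_) _
        rw [mul_comm (ℓ : ℝ≥0∞), mul_assoc, ← ENNReal.ofReal_natCast ℓ,
          ← ENNReal.ofReal_mul ℓ.cast_nonneg]
        exact mul_le_mul_right (hR ℓ) _
    _ = ENNReal.ofReal ρ := by
        rw [ENNReal.tsum_mul_right, hw.mean, ← mul_assoc, ← ENNReal.ofReal_mul hε.le,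
          mul_one_div_cancel hε.ne', ENNReal.ofReal_one, one_mul]

theorem le_segmentValue_of_two_points {l₁ l₂ : ℕ} (h₁ : l₁ ∈ Finset.Icc 1 L)
    (h₂ : l₂ ∈ Finset.Icc 1 L) {p₁ p₂ : ℝ} (hp₁ : 0 ≤ p₁) (hp₂ : 0 ≤ p₂) (hmass : p₁ + p₂ = 1)
    (hmean : p₁ * l₁ + p₂ * l₂ = 1 / ε) :
    ENNReal.ofReal ε * (ENNReal.ofReal p₁ * R l₁ + ENNReal.ofReal p₂ * R l₂) ≤
      segmentValue ε L R := by
  have htsum (f : ℕ → ℝ≥0∞) : ∑' ℓ, ((Pi.single l₁ (ENNReal.ofReal p₁) +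
      Pi.single l₂ (ENNReal.ofReal p₂) : ℕ → ℝ≥0∞) ℓ) * f ℓ =
        ENNReal.ofReal p₁ * f l₁ + ENNReal.ofReal p₂ * f l₂ := by
    simp only [Pi.add_apply, add_mul, ENNReal.tsum_add, Pi.single_apply, ite_mul, zero_mul,
      tsum_ite_eq]
  rw [← htsum R]
  refine le_iSup₂_of_le _ ⟨fun ℓ hℓ => ?_, ?_, ?_⟩ le_rfl
  · rw [Finset.mem_Icc] at h₁ h₂
    rw [Pi.add_apply, Pi.single_eq_of_ne (by omega), Pi.single_eq_of_ne (by omega), add_zero]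
  · simpa only [mul_one, ← ENNReal.ofReal_add hp₁ hp₂, hmass, ENNReal.ofReal_one]
      using htsum fun _ => 1
  · rw [tsum_congr fun ℓ => mul_comm _ _, htsum, ← hmean, ← ENNReal.ofReal_natCast,
      ← ENNReal.ofReal_natCast, ← ENNReal.ofReal_mul hp₁, ← ENNReal.ofReal_mul hp₂,
      ← ENNReal.ofReal_add (by positivity) (by positivity)]

/-- Among the points to the left of `μ`, the one seen from `(μ, h)` under the smallest slope gives
the supporting line. -/
theorem exists_forall_le_mul_sub_add {ι : Type*} {s : Finset ι} {f r : ι → ℝ} {μ h : ℝ}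
    (hmix : ∀ i ∈ s, ∀ j ∈ s, ∀ p q : ℝ, 0 ≤ p → 0 ≤ q → p + q = 1 → p * f i + q * f j = μ →
      p * r i + q * r j ≤ h) (hleft : ∃ i ∈ s, f i < μ) :
    ∃ A : ℝ, ∀ i ∈ s, r i ≤ A * (f i - μ) + h := by
  obtain ⟨i, hi, hmin⟩ := (s.filter (f · < μ)).exists_min_image (fun i => (h - r i) / (μ - f i))
    (hleft.imp fun _ => Finset.mem_filter.2)
  simp only [Finset.mem_filter, and_imp] at hi hmin
  obtain ⟨his, hiμ⟩ := hi
  have hslope : (h - r i) / (μ - f i) * (μ - f i) = h - r i := div_mul_cancel₀ _ (by linarith)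
  refine ⟨(h - r i) / (μ - f i), fun j hj => ?_⟩
  rcases lt_trichotomy (f j) μ with hlt | heq | hgt
  · have := (le_div_iff₀ (sub_pos.2 hlt)).1 (hmin j hj hlt)
    linarith
  · have := hmix j hj j hj 1 0 zero_le_one le_rfl (add_zero 1) (by linarith)
    rw [heq]
    linarith
  · have hpos : 0 < f j - f i := by linarith
    have hchord := hmix i his j hj ((f j - μ) / (f j - f i)) ((μ - f i) / (f j - f i))
      (div_nonneg (by linarith) hpos.le) (div_nonneg (by linarith) hpos.le)
      (by field_simp; ring) (by field_simp; ring)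
    rw [div_mul_eq_mul_div, div_mul_eq_mul_div, ← add_div, div_le_iff₀ hpos] at hchord
    refine le_of_mul_le_mul_left ?_ (sub_pos.2 hiμ)
    linear_combination hchord - (f j - μ) * hslope

theorem exists_affine_majorant_of_feasible (hε0 : 0 < ε) (hε1 : ε < 1) (hL : 1 / ε ≤ L)
    (hρ : 0 ≤ ρ) (hR : ∀ ℓ : ℕ, R ℓ ≤ ENNReal.ofReal (ℓ * ρ)) (hR1 : ENNReal.ofReal ρ ≤ R 1) :
    ∃ A B : ℝ, 0 ≤ B ∧ ENNReal.ofReal (A + B * ε) ≤ segmentValue ε L R ∧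
      ∀ ℓ ∈ Finset.Icc 1 L, (R ℓ).toReal ≤ A * ℓ + B := by
  have hfin (ℓ : ℕ) : R ℓ ≠ ∞ := ne_top_of_le_ne_top ofReal_ne_top (hR ℓ)
  have hε : 1 < 1 / ε := (one_lt_div hε0).2 hε1
  have h1 : 1 ∈ Finset.Icc 1 L := Finset.mem_Icc.2 ⟨le_rfl, by exact_mod_cast (hε.trans_le hL).le⟩
  have hVρ : segmentValue ε L R ≤ ENNReal.ofReal ρ := segmentValue_le hε0 hR
  set V := segmentValue ε L R
  have hV : V ≠ ∞ := ne_top_of_le_ne_top ofReal_ne_top hVρ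
  have hmix : ∀ i ∈ Finset.Icc 1 L, ∀ j ∈ Finset.Icc 1 L, ∀ p q : ℝ, 0 ≤ p → 0 ≤ q → p + q = 1 →
      p * i + q * j = 1 / ε → p * (R i).toReal + q * (R j).toReal ≤ V.toReal / ε := by
    intro i hi j hj p q hp hq hmass hmean
    have hle := le_segmentValue_of_two_points (R := R) hi hj hp hq hmass hmean
    rw [← ofReal_toReal (hfin i), ← ofReal_toReal (hfin j), ← ofReal_mul hp, ← ofReal_mul hq,
      ← ofReal_add (by positivity) (by positivity), ← ofReal_mul hε0.le,
      ofReal_le_iff_le_toReal hV] at hle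
    exact (le_div_iff₀' hε0).2 hle
  obtain ⟨A, hA⟩ := exists_forall_le_mul_sub_add hmix ⟨1, h1, by exact_mod_cast hε⟩
  have hAV : A ≤ V.toReal := by
    have hρ1 : ρ ≤ (R 1).toReal := (ofReal_le_iff_le_toReal (hfin 1)).1 hR1
    have hVρ : V.toReal ≤ ρ := toReal_le_of_le_ofReal hρ hVρ
    have hline := mul_le_mul_of_nonneg_right (hA 1 h1) hε0.le
    have hscale : (A * ((1 : ℕ) - 1 / ε) + V.toReal / ε) * ε = V.toReal - A * (1 - ε) := by
      field_simp
      push_cast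
      ring
    nlinarith
  refine ⟨A, (V.toReal - A) / ε, div_nonneg (by linarith) hε0.le, ?_, fun ℓ hℓ => ?_⟩
  · rw [div_mul_cancel₀ _ hε0.ne', add_sub_cancel]
    exact ofReal_toReal_le
  · exact (hA ℓ hℓ).trans_eq (by ring)

theorem exists_affine_majorant_of_infeasible (hL : L * ε < 1) (hε : 0 ≤ ε) (hρ : 0 ≤ ρ)
    (hR : ∀ ℓ : ℕ, R ℓ ≤ ENNReal.ofReal (ℓ * ρ)) :
    ∃ A B : ℝ, 0 ≤ B ∧ A + B * ε ≤ 0 ∧ ∀ ℓ ∈ Finset.Icc 1 L, (R ℓ).toReal ≤ A * ℓ + B := by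
  have hgap : 0 < 1 - L * ε := by linarith
  let K := L * ρ * ε / (1 - L * ε)
  have hK : 0 ≤ K := by positivity
  have hKgap : K * (1 - L * ε) = L * ρ * ε := div_mul_cancel₀ _ hgap.ne'
  refine ⟨-K, K * L + L * ρ, by positivity, by linarith, fun ℓ hℓ => ?_⟩
  have hℓL : (ℓ : ℝ) ≤ L := by exact_mod_cast (Finset.mem_Icc.1 hℓ).2
  have hRℓ : (R ℓ).toReal ≤ ℓ * ρ := toReal_le_of_le_ofReal (by positivity) (hR ℓ)
  linarith [mul_nonneg hK (sub_nonneg.2 hℓL), mul_le_mul_of_nonneg_right hℓL hρ]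

/-- Linear programming duality: `A + B ε` is the dual value of the majorant `ℓ ↦ A ℓ + B`. -/
theorem exists_affine_majorant (hε0 : 0 < ε) (hε1 : ε < 1) (hρ : 0 ≤ ρ)
    (hR : ∀ ℓ : ℕ, R ℓ ≤ ENNReal.ofReal (ℓ * ρ)) (hR1 : ENNReal.ofReal ρ ≤ R 1) :
    ∃ A B : ℝ, 0 ≤ B ∧ ENNReal.ofReal (A + B * ε) ≤ segmentValue ε L R ∧
      ∀ ℓ ∈ Finset.Icc 1 L, (R ℓ).toReal ≤ A * ℓ + B := by
  rcases le_or_gt (1 / ε) (L : ℝ) with hL | hL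
  · exact exists_affine_majorant_of_feasible hε0 hε1 hL hρ hR hR1
  · obtain ⟨A, B, hB, hneg, hAB⟩ :=
      exists_affine_majorant_of_infeasible ((lt_div_iff₀ hε0).1 hL) hε0.le hρ hR
    exact ⟨A, B, hB, (ofReal_of_nonpos hneg).trans_le zero_le, hAB⟩

/-- The affine majorant `ℓ ↦ (a - c) ℓ + b` and its dual value `(a - c) + b ε`, rearranged so that
no subtraction in `ℝ≥0∞` occurs. -/
theorem exists_nnreal_affine_majorant (hε0 : 0 < ε) (hε1 : ε < 1) (hρ : 0 ≤ ρ)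
    (hR : ∀ ℓ : ℕ, R ℓ ≤ ENNReal.ofReal (ℓ * ρ)) (hR1 : ENNReal.ofReal ρ ≤ R 1) :
    ∃ a b c : NNReal, a + b * ENNReal.ofReal ε ≤ segmentValue ε L R + c ∧
      ∀ ℓ ∈ Finset.Icc 1 L, R ℓ + c * ℓ ≤ a * ℓ + b := by
  obtain ⟨A, B, hB, hval, hAB⟩ := exists_affine_majorant (L := L) hε0 hε1 hρ hR hR1
  have hle {ℓ : ℕ} (hℓ : ℓ ∈ Finset.Icc 1 L) : R ℓ ≤ ENNReal.ofReal (A * ℓ + B) :=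
    (le_ofReal_iff_toReal_le (ne_top_of_le_ne_top ofReal_ne_top (hR ℓ))
      (toReal_nonneg.trans (hAB ℓ hℓ))).2 (hAB ℓ hℓ)
  rcases le_total 0 A with hA | hA
  · refine ⟨A.toNNReal, B.toNNReal, 0, ?_, fun ℓ hℓ => ?_⟩ <;>
      simp only [ofNNReal_toNNReal, coe_zero, zero_mul, add_zero, ← ofReal_natCast]
    · rwa [← ofReal_mul hB, ← ofReal_add hA (by positivity)]
    · rw [← ofReal_mul hA, ← ofReal_add (by positivity) hB]
      exact hle hℓ
  · refine ⟨0, B.toNNReal, (-A).toNNReal, ?_, fun ℓ hℓ => ?_⟩ <;>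
      simp only [ofNNReal_toNNReal, coe_zero, zero_mul, zero_add, ← ofReal_natCast]
    · rw [← ofReal_mul hB]
      exact (ofReal_le_ofReal (by linarith)).trans (ofReal_add_le.trans (add_le_add_left hval _))
    · rw [← ofReal_mul (by linarith)]
      refine (add_le_add_left (hle hℓ) _).trans ?_
      rw [← ofReal_add (toReal_nonneg.trans (hAB ℓ hℓ))
        (mul_nonneg (by linarith) ℓ.cast_nonneg)]
      exact ofReal_le_ofReal (by linarith)

end LinearProgram

section UpperBound

variable {η : (ℝ × ℝ) → ∀ N : ℕ, ℝ → (Fin N → ℝ) → (Fin N → ℝ)}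
variable {N m L : ℕ} {b : ℕ → ℕ} {σ : ℕ → ℝ} {x : Fin N → ℝ} {ε τ : ℝ}

theorem maxRiskZero_le (hη : IsTVDenoiser η) (hτ : 0 ≤ τ) (ℓ : ℕ) :
    maxRiskZero η τ ℓ ≤ ENNReal.ofReal (ℓ * (1 + 4 * τ ^ 2)) :=
  max_le (tvRiskZero_le hη (by simp) (by simp) ℓ hτ) (tvRiskZero_le hη (by simp) (by simp) ℓ hτ)

theorem le_maxRiskZero_one (hη : IsTVDenoiser η) (hτ : 0 ≤ τ) :
    ENNReal.ofReal (1 + 4 * τ ^ 2) ≤ maxRiskZero η τ 1 := by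
  refine le_max_of_le_left ?_
  rw [tvRiskZero_one hη _ hτ]
  exact (congrArg ENNReal.ofReal (by ring)).le

theorem tvRiskZero_eq_of_abs_eq_one (hη : IsTVDenoiser η) (hmeas : ∀ s N τ, Measurable (η s N τ))
    (hτ : 0 ≤ τ) {s : ℝ} (hs : |s| = 1) (t : ℝ) (ℓ : ℕ) :
    tvRiskZero η (s, t) ℓ τ = tvRiskZero η (1, s * t) ℓ τ := by
  rcases eq_or_eq_neg_of_abs_eq hs with rfl | rfl
  · rw [one_mul]
  · rw [neg_one_mul, ← tvRiskZero_neg hη (hmeas _ ℓ τ) hτ, Prod.neg_mk, neg_neg]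

theorem tvRiskZero_le_maxRiskZero (hη : IsTVDenoiser η) (hmeas : ∀ s N τ, Measurable (η s N τ))
    (hτ : 0 ≤ τ) {s t : ℝ} (hs : |s| = 1) (ht : |t| = 1) (ℓ : ℕ) :
    tvRiskZero η (s, t) ℓ τ ≤ maxRiskZero η τ ℓ := by
  have hst : |s * t| = 1 := by rw [abs_mul, hs, ht, one_mul]
  rw [tvRiskZero_eq_of_abs_eq_one hη hmeas hτ hs]
  rcases eq_or_eq_neg_of_abs_eq hst with h | h <;> rw [h]
  exacts [le_max_left _ _, le_max_right _ _]

/-- The risk of block `j` obeys the majorant, except that the two end blocks, with only one signed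
boundary, are bounded crudely. -/
theorem IsStaircase.tvRiskZero_add_le (hx : IsStaircase N m b σ x) (hseg : segOK L N x)
    (hη : IsTVDenoiser η) (hmeas : ∀ s N τ, Measurable (η s N τ)) (hτ : 0 ≤ τ)
    {α β γ : ℝ≥0∞} (hmaj : ∀ ℓ ∈ Finset.Icc 1 L, maxRiskZero η τ ℓ + γ * ℓ ≤ α * ℓ + β)
    {j : ℕ} (hj : j ≤ m) :
    tvRiskZero η (σ j, -σ (j + 1)) (b (j + 1) - b j) τ + γ * (b (j + 1) - b j : ℕ) ≤
      α * (b (j + 1) - b j : ℕ) + β +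
        ((if j = 0 then L * (ENNReal.ofReal (1 + 4 * τ ^ 2) + γ) else 0) +
          if j = m then L * (ENNReal.ofReal (1 + 4 * τ ^ 2) + γ) else 0) := by
  have hpos := hx.lt j hj
  have hlen := hx.length_le_of_segOK hseg hj
  set ℓ := b (j + 1) - b j
  by_cases hend : j = 0 ∨ j = m
  · have hσj : |σ j| ≤ 1 := hx.abs_sign_le_one (by omega)
    have hσj' : |-σ (j + 1)| ≤ 1 := (abs_neg _).trans_le (hx.abs_sign_le_one (by omega))
    have hcrude : tvRiskZero η (σ j, -σ (j + 1)) ℓ τ + γ * ℓ ≤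
        L * (ENNReal.ofReal (1 + 4 * τ ^ 2) + γ) := by
      refine (add_le_add_left (tvRiskZero_le hη hσj hσj' ℓ hτ) _).trans ?_
      rw [ofReal_mul ℓ.cast_nonneg, ofReal_natCast, mul_comm γ, ← mul_add]
      gcongr
    refine hcrude.trans (le_add_left ?_)
    rcases hend with h | h
    · exact le_add_right (if_pos h).ge
    · exact le_add_left (if_pos h).ge
  · obtain ⟨i, rfl⟩ := Nat.exists_eq_succ_of_ne_zero fun h => hend (Or.inl h)
    have hσi := hx.abs_sign i (by omega)
    have hσi' : |-σ (i + 1 + 1)| = 1 := (abs_neg _).trans (hx.abs_sign (i + 1) (by omega))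
    exact (add_le_add_left (tvRiskZero_le_maxRiskZero hη hmeas hτ hσi hσi' ℓ) _).trans <|
      (hmaj ℓ (Finset.mem_Icc.2 ⟨by omega, hlen⟩)).trans le_self_add

theorem riskAt_add_le (hN : 0 < N) (hseg : segOK L N x) (hη : IsTVDenoiser η)
    (hmeas : ∀ s N τ, Measurable (η s N τ)) (hτ : 0 ≤ τ) {α β γ : ℝ≥0∞}
    (hmaj : ∀ ℓ ∈ Finset.Icc 1 L, maxRiskZero η τ ℓ + γ * ℓ ≤ α * ℓ + β) :
    riskAt η N τ x + γ * N ≤ α * N + β * (changeCount N x + 1) +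
      2 * (L * (ENNReal.ofReal (1 + 4 * τ ^ 2) + γ)) := by
  obtain ⟨m, b, σ, hx⟩ := exists_isStaircase hN x
  have hsum : (N : ℝ≥0∞) = ∑ j ∈ Finset.range (m + 1), ((b (j + 1) - b j : ℕ) : ℝ≥0∞) := by
    simpa using hx.sum_range_eq fun _ => (1 : ℝ≥0∞)
  rw [hx.changeCount_eq]
  calc riskAt η N τ x + γ * N
      ≤ ∑ j ∈ Finset.range (m + 1), (tvRiskZero η (σ j, -σ (j + 1)) (b (j + 1) - b j) τ +
          γ * (b (j + 1) - b j : ℕ)) := by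
        rw [Finset.sum_add_distrib, ← Finset.mul_sum, ← hsum]
        exact add_le_add_left (hx.riskAt_le hη hmeas hτ) _
    _ ≤ _ := Finset.sum_le_sum fun j hj => hx.tvRiskZero_add_le hseg hη hmeas hτ hmaj
          (Nat.lt_succ_iff.1 (Finset.mem_range.1 hj))
    _ = _ := by
        simp only [Finset.sum_add_distrib, ← Finset.mul_sum, ← hsum, Finset.sum_ite_eq',
          Finset.sum_const, Finset.card_range, Finset.mem_range, Nat.succ_pos, Nat.lt_succ_self,
          if_true, nsmul_eq_mul]
        push_cast
        ring

variable (η) in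
/-- The worst-case risk `sup_ν E_ν ‖X - η^tv(X + Z; τ)‖₂²` over the class `F_{N,ε,TV}(L)`. -/
def supRisk (N : ℕ) (ε : ℝ) (L : ℕ) (τ : ℝ) : ℝ≥0∞ :=
  ⨆ ν ∈ tvClass N ε L, ∫⁻ x, riskAt η N τ x ∂ν

theorem tvMSE_eq_iInf_supRisk (hmeas : ∀ s N τ, Measurable (η s N τ)) (N : ℕ) (ε : ℝ) (L : ℕ) :
    tvMSE η N ε L = (N : ℝ≥0∞)⁻¹ * ⨅ (τ : ℝ) (_ : 0 ≤ τ), supRisk η N ε L τ := by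
  have hprod {τ : ℝ} {ν : Measure (Fin N → ℝ)} :
      ∫⁻ p, ENNReal.ofReal (sqError η N τ p.1 p.2) ∂(ν.prod (_root_.stdGaussian N)) =
        ∫⁻ x, riskAt η N τ x ∂ν :=
    lintegral_prod (fun p : (Fin N → ℝ) × (Fin N → ℝ) => ENNReal.ofReal (sqError η N τ p.1 p.2))
      (measurable_sqError (hmeas _ N τ)).ennreal_ofReal.aemeasurable
  simp only [supRisk, ← hprod]
  rfl

theorem supRisk_le (hN : 0 < N) (hη : IsTVDenoiser η) (hmeas : ∀ s N τ, Measurable (η s N τ))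
    (hτ : 0 ≤ τ) {α β γ : NNReal}
    (hmaj : ∀ ℓ ∈ Finset.Icc 1 L, maxRiskZero η τ ℓ + γ * ℓ ≤ α * ℓ + β) :
    supRisk η N ε L τ ≤ α * N + β * (N * ENNReal.ofReal ε + 1) +
      2 * (L * (ENNReal.ofReal (1 + 4 * τ ^ 2) + γ)) - γ * N := by
  refine iSup₂_le fun ν ⟨_, hseg, hcount⟩ =>
    ENNReal.le_sub_of_add_le_right (mul_ne_top coe_ne_top (natCast_ne_top N)) ?_
  calc ∫⁻ x, riskAt η N τ x ∂ν + γ * N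
      = ∫⁻ x, (riskAt η N τ x + γ * N) ∂ν := by
        rw [lintegral_add_right _ measurable_const, lintegral_const, measure_univ, mul_one]
    _ ≤ ∫⁻ x, (β * changeCount N x +
          (α * N + β + 2 * (L * (ENNReal.ofReal (1 + 4 * τ ^ 2) + γ)))) ∂ν := by
        refine lintegral_mono_ae ((ae_iff.2 hseg).mono fun x hx => ?_)
        exact (riskAt_add_le hN hx hη hmeas hτ hmaj).trans_eq (by ring)
    _ = β * ∫⁻ x, changeCount N x ∂ν +
          (α * N + β + 2 * (L * (ENNReal.ofReal (1 + 4 * τ ^ 2) + γ))) := by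
        rw [lintegral_add_right _ measurable_const, lintegral_const_mul' _ _ coe_ne_top,
          lintegral_const, measure_univ, mul_one]
    _ ≤ β * (N * ENNReal.ofReal ε) +
          (α * N + β + 2 * (L * (ENNReal.ofReal (1 + 4 * τ ^ 2) + γ))) := by gcongr
    _ = _ := by ring

theorem tvMSE_le (hN : 0 < N) (hη : IsTVDenoiser η) (hmeas : ∀ s N τ, Measurable (η s N τ))
    (hτ : 0 ≤ τ) {α β γ : NNReal}
    (hmaj : ∀ ℓ ∈ Finset.Icc 1 L, maxRiskZero η τ ℓ + γ * ℓ ≤ α * ℓ + β) :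
    tvMSE η N ε L ≤ α + β * ENNReal.ofReal ε +
      (β + 2 * (L * (ENNReal.ofReal (1 + 4 * τ ^ 2) + γ))) * (N : ℝ≥0∞)⁻¹ - γ := by
  have hN0 : (N : ℝ≥0∞) ≠ 0 := Nat.cast_ne_zero.2 hN.ne'
  have hcancel : (N : ℝ≥0∞)⁻¹ * N = 1 := ENNReal.inv_mul_cancel hN0 (natCast_ne_top N)
  calc tvMSE η N ε L
      ≤ (N : ℝ≥0∞)⁻¹ * (α * N + β * (N * ENNReal.ofReal ε + 1) +
          2 * (L * (ENNReal.ofReal (1 + 4 * τ ^ 2) + γ)) - γ * N) := by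
        rw [tvMSE_eq_iInf_supRisk hmeas]
        gcongr
        exact (iInf₂_le τ hτ).trans (supRisk_le hN hη hmeas hτ hmaj)
    _ = (α + β * ENNReal.ofReal ε) * ((N : ℝ≥0∞)⁻¹ * N) +
          (β + 2 * (L * (ENNReal.ofReal (1 + 4 * τ ^ 2) + γ))) * (N : ℝ≥0∞)⁻¹ -
          γ * ((N : ℝ≥0∞)⁻¹ * N) := by
        rw [ENNReal.mul_sub fun _ _ => ENNReal.inv_ne_top.2 hN0]
        ring_nf
    _ = _ := by rw [hcancel, mul_one, mul_one]

theorem limsup_tvMSE_le (hη : IsTVDenoiser η) (hmeas : ∀ s N τ, Measurable (η s N τ))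
    (hε0 : 0 < ε) (hε1 : ε < 1) (hτ : 0 ≤ τ) :
    limsup (fun N => tvMSE η N ε L) atTop ≤ segmentValue ε L (maxRiskZero η τ) := by
  obtain ⟨α, β, γ, hval, hmaj⟩ := exists_nnreal_affine_majorant (L := L) hε0 hε1 (by positivity)
    (maxRiskZero_le hη hτ) (le_maxRiskZero_one hη hτ)
  set K : ℝ≥0∞ := β + 2 * (L * (ENNReal.ofReal (1 + 4 * τ ^ 2) + γ))
  have hlim : Tendsto (fun N : ℕ => α + β * ENNReal.ofReal ε + K * (N : ℝ≥0∞)⁻¹ - γ) atTop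
      (nhds (α + β * ENNReal.ofReal ε - γ)) := by
    have hK : K ≠ ∞ := by finiteness
    have h := ENNReal.Tendsto.const_mul ENNReal.tendsto_inv_nat_nhds_zero (Or.inr hK)
    simpa using ENNReal.Tendsto.sub (h.const_add _) tendsto_const_nhds (Or.inr coe_ne_top)
  calc limsup (fun N => tvMSE η N ε L) atTop
      ≤ limsup (fun N : ℕ => α + β * ENNReal.ofReal ε + K * (N : ℝ≥0∞)⁻¹ - γ) atTop :=
        limsup_le_limsup ((eventually_gt_atTop 0).mono fun N hN => tvMSE_le hN hη hmeas hτ hmaj)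
    _ = α + β * ENNReal.ofReal ε - γ := hlim.limsup_eq
    _ ≤ segmentValue ε L (maxRiskZero η τ) := tsub_le_iff_right.2 hval

end UpperBound

section LowerBound

variable {η : (ℝ × ℝ) → ∀ N : ℕ, ℝ → (Fin N → ℝ) → (Fin N → ℝ)}
variable {N L ℓ : ℕ} {ε τ q : ℝ}

/-- The signal in `ℝ^N` that jumps by `q, q ^ 2, q ^ 3, …` after every `ℓ` samples: a monotone
staircase for `q = 1` and a square wave for `q = -1`. -/
def stairs (q : ℝ) (ℓ N : ℕ) : Fin N → ℝ := fun i => ∑ k ∈ Finset.range (i / ℓ), q ^ (k + 1)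

theorem jump_stairs (q : ℝ) (ℓ : ℕ) {i : ℕ} (hi : i + 1 < N) :
    jump N (stairs q ℓ N) i = if ℓ ∣ i + 1 then q ^ ((i + 1) / ℓ) else 0 := by
  rw [jump, extz_of_lt _ hi, extz_of_lt _ (by omega)]
  simp only [stairs, Nat.succ_div]
  split_ifs
  · rw [Finset.sum_range_succ, add_sub_cancel_left]
  · rw [add_zero, sub_self]

theorem mul_lt_of_le_sub_one_div (hN : 0 < N) (hℓ : 0 < ℓ) {j : ℕ} (hj : j ≤ (N - 1) / ℓ) :
    ℓ * j < N := by
  have := (Nat.le_div_iff_mul_le hℓ).1 hj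
  rw [mul_comm]
  omega

theorem exists_isStaircase_stairs (hN : 0 < N) (hℓ : 0 < ℓ) (hq : |q| = 1) :
    ∃ σ, (∀ j < (N - 1) / ℓ, σ (j + 1) = q ^ (j + 1)) ∧
      IsStaircase N ((N - 1) / ℓ) (fun j => min (ℓ * j) N) σ (stairs q ℓ N) := by
  have hlt {j : ℕ} (hj : j ≤ (N - 1) / ℓ) : ℓ * j < N := mul_lt_of_le_sub_one_div hN hℓ hj
  have hlast : N ≤ ℓ * ((N - 1) / ℓ + 1) := by
    have := Nat.lt_mul_div_succ (N - 1) hℓ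
    omega
  refine ⟨fun j => if 1 ≤ j ∧ j ≤ (N - 1) / ℓ then q ^ j else 0, fun j hj => if_pos (by omega),
    ⟨by simp, min_eq_right hlast, fun j hj => ?_⟩, by simp, by simp, fun j hj => ?_,
    fun j hj k hk => ?_, fun j hj => ?_⟩
  · have := hlt hj
    rw [mul_add_one]
    omega
  · rw [if_pos ⟨by omega, by omega⟩, abs_pow, hq, one_pow]
  · have := hlt hj
    rw [mul_add_one] at hk
    have hb : min (ℓ * j) N = ℓ * j := min_eq_left this.le
    rw [hb] at hk ⊢
    rw [jump_stairs q ℓ (by omega), if_neg]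
    rw [add_assoc, Nat.dvd_add_right (dvd_mul_right ℓ j)]
    exact Nat.not_dvd_of_pos_of_lt (by omega) (by omega)
  · have hlt' : ℓ * (j + 1) < N := hlt hj
    have hpos : 0 < ℓ * (j + 1) := by positivity
    have hb : min (ℓ * (j + 1)) N = ℓ * (j + 1) := min_eq_left hlt'.le
    have hq0 : q ≠ 0 := abs_pos.1 (hq.symm ▸ one_pos)
    rw [hb, jump_stairs q ℓ (by omega), Nat.sub_add_cancel hpos, if_pos (dvd_mul_right _ _),
      if_pos ⟨by omega, by omega⟩, Nat.mul_div_cancel_left _ hℓ]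
    exact mul_self_pos.2 (pow_ne_zero _ hq0)

theorem sub_mul_tvRiskZero_le_sum (hη : IsTVDenoiser η) (hmeas : ∀ s N τ, Measurable (η s N τ))
    (hτ : 0 ≤ τ) (hq : |q| = 1) {m : ℕ} {b : ℕ → ℕ} {σ : ℕ → ℝ}
    (hb : ∀ j < m, b (j + 1) - b j = ℓ) (hσ : ∀ j < m, σ (j + 1) = q ^ (j + 1)) :
    ((m - 1 : ℕ) : ℝ≥0∞) * tvRiskZero η (1, -q) ℓ τ ≤
      ∑ j ∈ Finset.range (m + 1), tvRiskZero η (σ j, -σ (j + 1)) (b (j + 1) - b j) τ := by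
  have hblock : ∀ j ∈ Finset.Ico 1 m,
      tvRiskZero η (σ j, -σ (j + 1)) (b (j + 1) - b j) τ = tvRiskZero η (1, -q) ℓ τ := by
    intro j hj
    obtain ⟨hj1, hjm⟩ := Finset.mem_Ico.1 hj
    obtain ⟨i, rfl⟩ := Nat.exists_eq_add_of_le' hj1
    rw [hb _ hjm, hσ _ (by omega), hσ _ hjm,
      tvRiskZero_eq_of_abs_eq_one hη hmeas hτ (by rw [abs_pow, hq, one_pow])]
    have hsq : q * q = 1 := by rw [← abs_mul_abs_self, hq, one_mul]
    rw [pow_succ q (i + 1), mul_neg, ← mul_assoc, ← mul_pow, hsq, one_pow, one_mul]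
  calc ((m - 1 : ℕ) : ℝ≥0∞) * tvRiskZero η (1, -q) ℓ τ
      = ∑ j ∈ Finset.Ico 1 m, tvRiskZero η (σ j, -σ (j + 1)) (b (j + 1) - b j) τ := by
        rw [Finset.sum_congr rfl hblock, Finset.sum_const, Nat.card_Ico, nsmul_eq_mul]
    _ ≤ _ := Finset.sum_le_sum_of_subset fun j hj => by
        have := (Finset.mem_Ico.1 hj).2
        exact Finset.mem_range.2 (by omega)

theorem sum_riskAt_le_supRisk {ι : Type*} {s : Finset ι} {W : ι → ℝ≥0∞} {x : ι → Fin N → ℝ}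
    (hmass : ∑ i ∈ s, W i = 1) (hseg : ∀ i ∈ s, segOK L N (x i))
    (hcount : ∑ i ∈ s, W i * changeCount N (x i) ≤ N * ENNReal.ofReal ε) :
    ∑ i ∈ s, W i * riskAt η N τ (x i) ≤ supRisk η N ε L τ := by
  have hint (f : (Fin N → ℝ) → ℝ≥0∞) :
      ∫⁻ y, f y ∂(∑ i ∈ s, W i • Measure.dirac (x i)) = ∑ i ∈ s, W i * f (x i) := by
    simp only [lintegral_finsetSum_measure, lintegral_smul_measure, lintegral_dirac, smul_eq_mul]
  rw [← hint]
  refine le_iSup₂_of_le _ ⟨⟨?_⟩, ?_, (hint _).trans_le hcount⟩ le_rfl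
  · simp [Measure.finsetSum_apply, hmass]
  · simp only [Measure.finsetSum_apply, Measure.smul_apply, smul_eq_mul]
    refine Finset.sum_eq_zero fun i hi => ?_
    simp [hseg i hi]

theorem exists_maxRiskZero_eq (η : (ℝ × ℝ) → ∀ N : ℕ, ℝ → (Fin N → ℝ) → (Fin N → ℝ)) (τ : ℝ)
    (ℓ : ℕ) : ∃ q : ℝ, |q| = 1 ∧ maxRiskZero η τ ℓ = tvRiskZero η (1, -q) ℓ τ := by
  rcases max_choice (tvRiskZero η (1, 1) ℓ τ) (tvRiskZero η (1, -1) ℓ τ) with h | h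
  · exact ⟨-1, by simp, h.trans (by rw [neg_neg])⟩
  · exact ⟨1, by simp, h⟩

theorem exists_seq_tendsto_riskAt (hη : IsTVDenoiser η) (hmeas : ∀ s N τ, Measurable (η s N τ))
    (hτ : 0 ≤ τ) (hN : 0 < N) (hℓ : 0 < ℓ) (hℓL : ℓ ≤ L) :
    ∃ (x : ℕ → Fin N → ℝ) (r : ℝ≥0∞), (∀ n, segOK L N (x n)) ∧
      (∀ n, ℓ * changeCount N (x n) ≤ N) ∧
      Tendsto (fun n => riskAt η N τ (x n)) atTop (nhds r) ∧
      ((N - 2 * L : ℕ) : ℝ≥0∞) * maxRiskZero η τ ℓ ≤ ℓ * r := by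
  obtain ⟨q, hq, hmax⟩ := exists_maxRiskZero_eq η τ ℓ
  obtain ⟨σ, hσ, hstairs⟩ := exists_isStaircase_stairs hN hℓ hq
  have hx (n : ℕ) := hstairs.smul (c := (n + 1 : ℕ)) (by positivity)
  let b (j : ℕ) : ℕ := min (ℓ * j) N
  have hlen : ∀ j < (N - 1) / ℓ, b (j + 1) - b j = ℓ := by
    intro j hj
    have : ℓ * (j + 1) < N := mul_lt_of_le_sub_one_div hN hℓ hj
    simp only [b, mul_add_one] at this ⊢
    omega
  refine ⟨fun n => ((n + 1 : ℕ) : ℝ) • stairs q ℓ N, _, fun n => ?_, fun n => ?_,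
    (tendsto_add_atTop_iff_nat 1).2 (hstairs.tendsto_riskAt hη hmeas hτ), ?_⟩
  · refine (hx n).segOK_of_length_le fun j _ => ?_
    rw [mul_add_one]
    omega
  · rw [(hx n).changeCount_eq]
    exact (mul_lt_of_le_sub_one_div hN hℓ le_rfl).le
  · have hcover : N - 2 * L ≤ ℓ * ((N - 1) / ℓ - 1) := by
      have := Nat.lt_mul_div_succ (N - 1) hℓ
      rw [mul_add_one] at this
      rw [Nat.mul_sub_one]
      omega
    calc ((N - 2 * L : ℕ) : ℝ≥0∞) * maxRiskZero η τ ℓ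
        ≤ ((ℓ * ((N - 1) / ℓ - 1) : ℕ) : ℝ≥0∞) * tvRiskZero η (1, -q) ℓ τ := by
          rw [hmax]
          gcongr
      _ ≤ _ := by
          rw [Nat.cast_mul, mul_assoc]
          gcongr
          exact sub_mul_tvRiskZero_le_sum hη hmeas hτ hq hlen hσ

theorem IsSegmentLaw.tsum_mul_eq {w : ℕ → ℝ≥0∞} (hw : IsSegmentLaw ε L w) (f : ℕ → ℝ≥0∞) :
    ∑' ℓ, w ℓ * f ℓ = ∑ ℓ ∈ Finset.Icc 1 L, w ℓ * f ℓ := by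
  refine tsum_eq_sum fun ℓ hℓ => ?_
  rw [Finset.mem_Icc] at hℓ
  rw [hw.eq_zero ℓ (by omega), zero_mul]

theorem IsSegmentLaw.sum_eq_one {w : ℕ → ℝ≥0∞} (hw : IsSegmentLaw ε L w) :
    ∑ ℓ ∈ Finset.Icc 1 L, w ℓ = 1 := by
  simpa only [mul_one, hw.mass] using (hw.tsum_mul_eq fun _ => 1).symm

theorem IsSegmentLaw.sum_size_biased {w : ℕ → ℝ≥0∞} (hw : IsSegmentLaw ε L w) (hε : 0 < ε) :
    ∑ ℓ ∈ Finset.Icc 1 L, ENNReal.ofReal ε * (w ℓ * ℓ) = 1 := by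
  rw [← Finset.mul_sum, ← hw.tsum_mul_eq fun ℓ => ℓ]
  simp only [mul_comm (w _), hw.mean]
  rw [← ofReal_mul hε.le, mul_one_div_cancel hε.ne', ofReal_one]

/-- A law `w` of segment lengths is realised by choosing the length `ℓ` of all segments with the
size-biased probability `ε ℓ w ℓ`: a signal with segment length `ℓ` has about `N / ℓ` jumps, so the
expected number of jumps is at most `N ε`. -/
theorem sub_mul_segmentValue_le_supRisk (hη : IsTVDenoiser η)
    (hmeas : ∀ s N τ, Measurable (η s N τ)) (hε : 0 < ε) (hτ : 0 ≤ τ) (hN : 0 < N) :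
    ((N - 2 * L : ℕ) : ℝ≥0∞) * segmentValue ε L (maxRiskZero η τ) ≤ supRisk η N ε L τ := by
  simp only [segmentValue, ENNReal.mul_iSup]
  refine iSup₂_le fun w hw => ?_
  choose! x r hseg hcount hlim hrisk using fun ℓ (hℓ : ℓ ∈ Finset.Icc 1 L) =>
    exists_seq_tendsto_riskAt hη hmeas hτ hN (Finset.mem_Icc.1 hℓ).1 (Finset.mem_Icc.1 hℓ).2
  let W (ℓ : ℕ) : ℝ≥0∞ := ENNReal.ofReal ε * (w ℓ * ℓ)
  have hmass : ∑ ℓ ∈ Finset.Icc 1 L, W ℓ = 1 := hw.sum_size_biased hε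
  have hchanges (n : ℕ) : ∑ ℓ ∈ Finset.Icc 1 L, W ℓ * changeCount N (x ℓ n) ≤
      N * ENNReal.ofReal ε := by
    calc ∑ ℓ ∈ Finset.Icc 1 L, W ℓ * changeCount N (x ℓ n)
        ≤ ∑ ℓ ∈ Finset.Icc 1 L, ENNReal.ofReal ε * w ℓ * N := by
          refine Finset.sum_le_sum fun ℓ hℓ => ?_
          simp only [W, mul_assoc]
          gcongr
          exact_mod_cast hcount ℓ hℓ n
      _ = N * ENNReal.ofReal ε := by
          rw [← Finset.sum_mul, ← Finset.mul_sum, hw.sum_eq_one, mul_one, mul_comm]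
  calc ((N - 2 * L : ℕ) : ℝ≥0∞) * (ENNReal.ofReal ε * ∑' ℓ, w ℓ * maxRiskZero η τ ℓ)
      = ∑ ℓ ∈ Finset.Icc 1 L,
          ENNReal.ofReal ε * w ℓ * (((N - 2 * L : ℕ) : ℝ≥0∞) * maxRiskZero η τ ℓ) := by
        rw [hw.tsum_mul_eq, Finset.mul_sum, Finset.mul_sum]
        exact Finset.sum_congr rfl fun ℓ _ => by ring
    _ ≤ ∑ ℓ ∈ Finset.Icc 1 L, W ℓ * r ℓ := by
        refine Finset.sum_le_sum fun ℓ hℓ => ?_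
        simp only [W, mul_assoc]
        exact mul_le_mul_right (mul_le_mul_right (hrisk ℓ hℓ) _) _
    _ ≤ supRisk η N ε L τ := by
        refine le_of_tendsto' (tendsto_finsetSum _ fun ℓ hℓ =>
          ENNReal.Tendsto.const_mul (hlim ℓ hℓ) (Or.inr ?_)) fun n =>
          sum_riskAt_le_supRisk hmass (fun ℓ hℓ => hseg ℓ hℓ n) (hchanges n)
        exact ne_top_of_le_ne_top one_ne_top
          (hmass ▸ Finset.single_le_sum (fun _ _ => zero_le) hℓ)

theorem sub_div_mul_tvLimitVal_le (hη : IsTVDenoiser η) (hmeas : ∀ s N τ, Measurable (η s N τ))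
    (hε : 0 < ε) (hN : 0 < N) :
    (N : ℝ≥0∞)⁻¹ * ((N - 2 * L : ℕ) : ℝ≥0∞) * tvLimitVal η ε L ≤ tvMSE η N ε L := by
  rw [tvMSE_eq_iInf_supRisk hmeas, tvLimitVal_eq_iInf_segmentValue, mul_assoc]
  gcongr
  exact le_iInf₂ fun τ hτ => (mul_le_mul_right (iInf₂_le τ hτ) _).trans
    (sub_mul_segmentValue_le_supRisk hη hmeas hε hτ hN)

theorem tendsto_inv_mul_natSub (K : ℕ) :
    Tendsto (fun N : ℕ => (N : ℝ≥0∞)⁻¹ * ((N - K : ℕ) : ℝ≥0∞)) atTop (nhds 1) := by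
  have h : Tendsto (fun N : ℕ => 1 - (N : ℝ≥0∞)⁻¹ * K) atTop (nhds 1) := by
    have := ENNReal.Tendsto.mul_const ENNReal.tendsto_inv_nat_nhds_zero
      (Or.inr (natCast_ne_top K))
    simpa using ENNReal.Tendsto.sub tendsto_const_nhds this (Or.inl one_ne_top)
  refine h.congr' ((eventually_gt_atTop 0).mono fun N hN => ?_)
  have hN0 : (N : ℝ≥0∞) ≠ 0 := Nat.cast_ne_zero.2 hN.ne'
  simp only [natCast_sub]
  rw [ENNReal.mul_sub fun _ _ => ENNReal.inv_ne_top.2 hN0,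
    ENNReal.inv_mul_cancel hN0 (natCast_ne_top N)]

theorem le_liminf_tvMSE (hη : IsTVDenoiser η) (hmeas : ∀ s N τ, Measurable (η s N τ))
    (hε : 0 < ε) : tvLimitVal η ε L ≤ liminf (fun N => tvMSE η N ε L) atTop := by
  have h := ENNReal.Tendsto.mul_const (b := tvLimitVal η ε L) (tendsto_inv_mul_natSub (2 * L))
    (Or.inl one_ne_zero)
  rw [← one_mul (tvLimitVal η ε L), ← h.liminf_eq]
  exact liminf_le_liminf ((eventually_gt_atTop 0).mono fun N hN =>
    sub_div_mul_tvLimitVal_le hη hmeas hε hN)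

end LowerBound

/-- **Asymptotic minimax MSE of total variation denoising.**
Let `η s ℓ τ` be, for each boundary sign pair `s`, dimension `ℓ` and `τ ≥ 0`,
the minimizer of `½‖y − x‖₂² + τ‖x‖_TV + τ(s₁x₁ + s₂x_ℓ)`.  Then for
`ε ∈ (0,1)` and `L ≥ 1` the limit `M_L(ε|TV) = lim_N M(F_{N,ε,TV}(L)|TV)`
exists and equals
`inf_{τ≥0} max_π { ε Σ_{ℓ≤L, s∈{++,+−}} π_{ℓ,s} r_s(ℓ;τ) : Σ ℓ π_{ℓ,s} = 1/ε }`. -/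
theorem tv_minimax
    (η : (ℝ × ℝ) → ∀ N : ℕ, ℝ → (Fin N → ℝ) → (Fin N → ℝ))
    (hmeas : ∀ s N τ, Measurable (η s N τ))
    (hmin : ∀ (s : ℝ × ℝ) (N : ℕ) (τ : ℝ), 0 ≤ τ → ∀ y x : Fin N → ℝ,
      tvObj s N τ y (η s N τ y) ≤ tvObj s N τ y x)
    (ε : ℝ) (hε0 : 0 < ε) (hε1 : ε < 1) (L : ℕ) (hL : 1 ≤ L) :
    Tendsto (fun N : ℕ => tvMSE η N ε L) atTop (nhds (tvLimitVal η ε L)) := by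
  have hη : IsTVDenoiser η := hmin
  have hlimsup : limsup (fun N => tvMSE η N ε L) atTop ≤ tvLimitVal η ε L := by
    rw [tvLimitVal_eq_iInf_segmentValue]
    exact le_iInf₂ fun τ hτ => limsup_tvMSE_le hη hmeas hε0 hε1 hτ
  exact tendsto_of_le_liminf_of_limsup_le (le_liminf_tvMSE hη hmeas hε0) hlimsup
end
end
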